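/- arXiv:1608.07350 — 7 statements merged into one kernel-verified Lean document; each statement's English description precedes it below -/
import Mathlib

section
/- Let r ∈ ℤ and let h satisfy 1 ≤ h ≤ n. Then E_h(M_L^r) ≠ {0}; that is, there exists α ∈ M_L^r with E_h(α) ≠ 0. -/
/-!
Over an algebraic closure `E` of `K`, the characteristic polynomial of `α ∈ L` is
`∏_σ (X - σ α)`, the product running over the `n` embeddings `σ : L → E`
(`charpoly_mulLeft_map`). Writing `α = ∑ cᵢ bᵢ` in a `K`-basis `b` of `L`, its coefficient of
`X^(n-h)` is therefore a polynomial in the `cᵢ` with coefficients in `E`. This polynomial is not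
zero: separability makes the matrix `(σ (bᵢ))` invertible, so the linear forms `∑ cᵢ σ(bᵢ)` can be
given arbitrary values in `E`, and giving `h` of them the value `1` and the others the value `0`
turns the product into `(X - 1)^h X^(n-h)`, whose coefficient of `X^(n-h)` is `(-1)^h`.

A nonzero polynomial cannot vanish on a product of infinite sets. Taking for the `i`-th set the
`c ∈ K` with `c bᵢ ∈ M_L^r`, which contains elements of every large valuation, gives a suitable
`α ∈ M_L^r`.
-/

open scoped Classical

/-- `Ecoef K L h α` is `E_h(α) = e_h(σ₁(α),…,σₙ(α))`, characterized by the fact that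
`(-1)^h * E_h(α)` is the coefficient of `X^(n-h)` in the characteristic polynomial of
multiplication by `α` on `L` as a `K`-vector space. -/
noncomputable def Ecoef (K L : Type) [Field K] [Field L] [Algebra K L]
    [FiniteDimensional K L] (h : ℕ) (α : L) : K :=
  (-1) ^ h * ((LinearMap.mulLeft K α).charpoly.coeff (Module.finrank K L - h))

open Polynomial

/-- The roots of the characteristic polynomial of `α` are its conjugates. Both sides agree at every
`t ∈ K`, where they compute the norm of `t - α`, and `K` is infinite. -/
theorem charpoly_mulLeft_map (K L E : Type) [Field K] [Field L] [Algebra K L]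
    [FiniteDimensional K L] [Algebra.IsSeparable K L] [Field E] [Algebra K E] [IsAlgClosed E]
    [Infinite K] (α : L) :
    (LinearMap.mulLeft K α).charpoly.map (algebraMap K E) =
      ∏ σ : L →ₐ[K] E, (X - C (σ α)) := by
  apply Polynomial.eq_of_infinite_eval_eq
  refine (Set.infinite_range_of_injective (algebraMap K E).injective).mono ?_
  rintro _ ⟨t, rfl⟩
  have h1 : algebraMap K (Module.End K L) t - LinearMap.mulLeft K α
      = LinearMap.mulLeft K (algebraMap K L t - α) := by
    ext x
    simp [sub_mul, Algebra.smul_def]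
  have h2 := Algebra.norm_eq_prod_embeddings K E (algebraMap K L t - α)
  simp only [Set.mem_ofPred_eq, Polynomial.eval_map_apply, LinearMap.eval_charpoly, h1,
    Polynomial.eval_prod, Polynomial.eval_sub, Polynomial.eval_X, Polynomial.eval_C]
  rw [Algebra.norm_apply] at h2
  exact h2.trans (by simp)

/-- Some `α` whose coordinates lie in prescribed infinite subsets of `K` has a nonzero
characteristic coefficient in degree `n - h`: as a polynomial in the coordinates, this coefficient
is nonzero over the algebraically closed field `E`. -/
theorem exists_coeff_ne_zero (K L E : Type) [Field K] [Field L] [Algebra K L]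
    [FiniteDimensional K L] [Algebra.IsSeparable K L] [Infinite K]
    [Field E] [Algebra K E] [IsAlgClosed E]
    {ι : Type} [Fintype ι] [DecidableEq ι] (b : Module.Basis ι K L)
    (s : ι → Set K) (hs : ∀ i, (s i).Infinite) (h : ℕ) (hh : h ≤ Module.finrank K L) :
    ∃ c : ι → K, (∀ i, c i ∈ s i) ∧
      (LinearMap.mulLeft K (∑ i, c i • b i)).charpoly.coeff (Module.finrank K L - h) ≠ 0 := by
  by_contra! hcon
  let F : (MvPolynomial ι E)[X] :=
    ∏ σ : L →ₐ[K] E, (X - C (∑ i, MvPolynomial.X i * MvPolynomial.C (σ (b i))))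
  have hF : ∀ x : ι → E, F.map (MvPolynomial.eval x) =
      ∏ σ : L →ₐ[K] E, (X - C (∑ i, x i * σ (b i))) := by
    intro x
    simp [F, Polynomial.map_prod, Polynomial.map_sum]
  have hcardE : Fintype.card (L →ₐ[K] E) = Module.finrank K L := AlgHom.card K L E
  have hzero : F.coeff (Module.finrank K L - h) = 0 := by
    refine MvPolynomial.funext_set (fun i => algebraMap K E '' s i)
      (fun i => (hs i).image (algebraMap K E).injective.injOn) ?_
    intro x hx
    choose c hc hcx using fun i => hx i trivial
    have hσ : ∀ σ : L →ₐ[K] E, σ (∑ i, c i • b i) = ∑ i, x i * σ (b i) := by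
      intro σ
      simp [← hcx, Algebra.smul_def]
    have h1 := charpoly_mulLeft_map K L E (∑ i, c i • b i)
    simp only [hσ] at h1
    rw [← hF] at h1
    have h2 := congrArg (fun q => q.coeff (Module.finrank K L - h)) h1
    simp only [Polynomial.coeff_map, hcon c hc, map_zero] at h2
    rw [← h2, map_zero]
  have hcard : Fintype.card ι = Fintype.card (L →ₐ[K] E) := by
    rw [hcardE, Module.finrank_eq_card_basis b]
  let e : ι ≃ (L →ₐ[K] E) := Fintype.equivOfCardEq hcard
  let M := Algebra.embeddingsMatrixReindex K E b e
  have hdet : IsUnit M.det := by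
    rw [isUnit_iff_ne_zero]
    intro h0
    have h1 := Algebra.discr_eq_det_embeddingsMatrixReindex_pow_two K E b e
    change _ = M.det ^ 2 at h1
    rw [h0, zero_pow two_ne_zero, map_eq_zero] at h1
    exact Algebra.discr_not_zero_of_basis K b h1
  obtain ⟨S, -, hS⟩ := Finset.exists_subset_card_eq
    (s := (Finset.univ : Finset (L →ₐ[K] E))) (n := h) (by rw [Finset.card_univ, hcardE]; exact hh)
  -- The point `x` is chosen so that the linear forms indexed by `S` are `1` and the others `0`.
  let y : ι → E := fun j => if e j ∈ S then 1 else 0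
  let x : ι → E := Matrix.vecMul y M⁻¹
  have hxy : Matrix.vecMul x M = y := by
    simp [x, Matrix.vecMul_vecMul, Matrix.nonsing_inv_mul _ hdet]
  have hxσ : ∀ σ : L →ₐ[K] E, ∑ i, x i * σ (b i) = if σ ∈ S then 1 else 0 := by
    intro σ
    have h1 := congrFun hxy (e.symm σ)
    simpa [Matrix.vecMul, dotProduct, M, y, Algebra.embeddingsMatrixReindex] using h1
  have hprod : F.map (MvPolynomial.eval x) = (X - 1) ^ h * X ^ (Module.finrank K L - h) := by
    rw [hF]
    have h1 : ∀ σ : L →ₐ[K] E, (X - C (∑ i, x i * σ (b i)) : E[X]) =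
        if σ ∈ S then X - 1 else X := by
      intro σ
      rw [hxσ]
      split_ifs <;> simp
    rw [Finset.prod_congr rfl fun σ _ => h1 σ, Finset.prod_ite, Finset.prod_const,
      Finset.prod_const]
    have h2 : (Finset.univ.filter fun σ => σ ∉ S).card = Module.finrank K L - h := by
      rw [Finset.filter_not, Finset.filter_univ_mem, ← Finset.compl_eq_univ_sdiff,
        Finset.card_compl, hcardE, hS]
    rw [Finset.filter_univ_mem, hS, h2]
  have h3 := congrArg (fun q => q.coeff (Module.finrank K L - h)) hprod
  simp only [Polynomial.coeff_map, hzero, map_zero, Polynomial.coeff_mul_X_pow',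
    le_refl, if_true, Nat.sub_self, Polynomial.coeff_zero_eq_eval_zero] at h3
  simp only [eval_pow, eval_sub, eval_X, eval_one, zero_sub] at h3
  exact pow_ne_zero h (neg_ne_zero.mpr one_ne_zero) h3.symm

theorem stmt1
    (p : ℕ) (hp : p.Prime)
    (K L : Type) [Field K] [Field L] [Algebra K L] [FiniteDimensional K L]
    [Algebra.IsSeparable K L]
    (n : ℕ) (hn : 0 < n) (hrank : Module.finrank K L = n)
    (vK : K → ℤ) (vL : L → ℤ)
    (hvKmul : ∀ x y : K, x ≠ 0 → y ≠ 0 → vK (x * y) = vK x + vK y)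
    (hvKadd : ∀ x y : K, x ≠ 0 → y ≠ 0 → x + y ≠ 0 → min (vK x) (vK y) ≤ vK (x + y))
    (hvKsurj : ∀ m : ℤ, ∃ x : K, x ≠ 0 ∧ vK x = m)
    (hvLmul : ∀ x y : L, x ≠ 0 → y ≠ 0 → vL (x * y) = vL x + vL y)
    (hvLadd : ∀ x y : L, x ≠ 0 → y ≠ 0 → x + y ≠ 0 → min (vL x) (vL y) ≤ vL (x + y))
    (hvLsurj : ∀ m : ℤ, ∃ x : L, x ≠ 0 ∧ vL x = m)
    (hext : ∀ x : K, x ≠ 0 → vL (algebraMap K L x) = (n : ℤ) * vK x)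
    (hcomplete : ∀ s : ℕ → K,
      (∀ m : ℤ, ∃ N : ℕ, ∀ i, N ≤ i → ∀ j, N ≤ j → s i - s j = 0 ∨ m ≤ vK (s i - s j)) →
      ∃ x : K, ∀ m : ℤ, ∃ N : ℕ, ∀ i, N ≤ i → s i - x = 0 ∨ m ≤ vK (s i - x))
    (hreschar : (p : K) = 0 ∨ 1 ≤ vK (p : K))
    (hresperf : ∀ x : K, (x = 0 ∨ 0 ≤ vK x) →
      ∃ y : K, (y = 0 ∨ 0 ≤ vK y) ∧ (x - y ^ p = 0 ∨ 1 ≤ vK (x - y ^ p)))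
    (r : ℤ) (h : ℕ) (h1 : 1 ≤ h) (h2 : h ≤ n) :
    ∃ α : L, (α = 0 ∨ r ≤ vL α) ∧ Ecoef K L h α ≠ 0 := by
  have hn1 : (1 : ℤ) ≤ n := by exact_mod_cast hn
  choose π hπ0 hπ using hvKsurj
  have hπinj : Function.Injective π := fun a b hab => by rw [← hπ a, ← hπ b, hab]
  have : Infinite K := Infinite.of_injective π hπinj
  let b := Module.finBasis K L
  have hs : ∀ i, {c : K | c • b i = 0 ∨ r ≤ vL (c • b i)}.Infinite := by
    intro i
    -- Multiplying `b i` by an element of valuation at least `|r| + |vL (b i)|` lands in `M_L^r`.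
    refine Set.infinite_of_injective_forall_mem
      (f := fun k : ℕ => π (|r| + |vL (b i)| + k)) ?_ ?_
    · intro k l hkl
      have := hπinj hkl
      simpa using this
    · intro k
      right
      rw [Algebra.smul_def, hvLmul _ _ (by simpa using hπ0 _) (b.ne_zero i), hext _ (hπ0 _), hπ]
      have hr := le_abs_self r
      have hb := neg_abs_le (vL (b i))
      have h0 : 0 ≤ |r| + |vL (b i)| + (k : ℤ) := by positivity
      have hk : (0 : ℤ) ≤ k := by positivity
      nlinarith [mul_le_mul_of_nonneg_right hn1 h0]
  obtain ⟨c, hc, hne⟩ := exists_coeff_ne_zero K L (AlgebraicClosure K) b _ hs h (hrank ▸ h2)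
  refine ⟨∑ i, c i • b i, ?_, ?_⟩
  · refine Finset.sum_induction _ (fun x => x = 0 ∨ r ≤ vL x) ?_ (Or.inl rfl) fun i _ => hc i
    intro x y hx hy
    by_cases hx0 : x = 0
    · simpa [hx0] using hy
    by_cases hy0 : y = 0
    · simpa [hy0] using hx
    by_cases hxy : x + y = 0
    · exact Or.inl hxy
    · exact Or.inr ((le_min (hx.resolve_left hx0) (hy.resolve_left hy0)).trans
        (hvLadd x y hx0 hy0 hxy))
  · exact mul_ne_zero (pow_ne_zero _ (neg_ne_zero.mpr one_ne_zero)) hne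
end

section
/- Let b, c, m, w be positive integers such that mb + c = w and b ≠ c. Let μ be the partition of w consisting of m copies of b and 1 copy of c, and let λ be the partition of w consisting of the single part w. Then for every n ≥ w, the coefficient d_{λμ} of the monomial X_w in ψ_μ ∈ ℤ[X_1,…,X_n] equals (−1)^{w+m+1}·w. -/
/-!
Write `μ = (b^m, c)` and let `Φ` be the ring homomorphism from symmetric polynomials to `ℤ[X]`
obtained by expressing a symmetric polynomial in `e_1, …, e_n` and setting `e_w = X` and all other
`e_k = 0`. The coefficient in question is the coefficient of `X` in `Φ(m_μ)` (`coeff_specAt`).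

Put `A(m, c) = ∑ i, X_i ^ c * e_m(X_j ^ b : j ≠ i)` (`hookSum`), which is `m_μ` when `b ≠ c`
(`msymmM_eq_hookSum`). Expanding a product gives
`p_c * e_{m+1}(X_1 ^ b, …, X_n ^ b) = A(m+1, c) + A(m, c+b)` (`psum_mul_powEsymm`).
By Newton's identities `Φ(p_k) = 0` for `0 < k < w` and `Φ(p_w) = (-1) ^ (w+1) * w * X`
(`symSpec_psum`). Hence `Φ(A(m+1, c)) = -Φ(A(m, c+b))` whenever `(m+1) b + c = w`, and induction
down to `A(0, w) = p_w` yields `Φ(m_μ) = (-1) ^ (w+m+1) * w * X` (`symSpec_hookSum`).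
-/

open scoped Classical

/-- The monomial symmetric polynomial in `n` variables associated to the partition
(multiset of positive integers) `μ`: the sum of all distinct monomials whose multiset of
nonzero exponents equals `μ`. -/
noncomputable def msymmM (n : ℕ) (R : Type) [CommSemiring R] (μ : Multiset ℕ) :
    MvPolynomial (Fin n) R :=
  ∑ d : Fin n → Fin (μ.sum + 1),
    if (Multiset.map (fun i => (d i : ℕ)) Finset.univ.val).filter (· ≠ 0) = μ then
      MvPolynomial.monomial (Finsupp.equivFunOnFinite.symm fun i => (d i : ℕ)) (1 : R)
    else 0

open MvPolynomial in
/-- The sum `∑ i, X_i ^ c * e_m(X_j ^ b : j ≠ i)`. For distinct positive `b`, `c` it is the monomial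
symmetric polynomial of the partition with `m` parts `b` and one part `c`; allowing arbitrary `c`
makes the recursion `psum_mul_powEsymm` uniform. -/
noncomputable def hookSum (n b m c : ℕ) : MvPolynomial (Fin n) ℤ :=
  ∑ i : Fin n, ∑ S ∈ (Finset.univ.erase i).powersetCard m,
    X i ^ c * ∏ j ∈ S, X j ^ b

open MvPolynomial in
/-- The elementary symmetric polynomial `e_m` in the powers `X_j ^ b`. -/
noncomputable def powEsymm (n b m : ℕ) : MvPolynomial (Fin n) ℤ :=
  ∑ S ∈ (Finset.univ : Finset (Fin n)).powersetCard m, ∏ j ∈ S, X j ^ b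

open MvPolynomial in
/-- Expanding `p_c * e_{m+1}(X ^ b)`: the index of the factor from `p_c` either avoids or hits
the index set chosen in `e_{m+1}`. -/
theorem psum_mul_powEsymm (n b m c : ℕ) :
    psum (Fin n) ℤ c * powEsymm n b (m + 1) = hookSum n b (m + 1) c + hookSum n b m (c + b) := by
  rw [psum, Finset.sum_mul, hookSum, hookSum, ← Finset.sum_add_distrib]
  refine Finset.sum_congr rfl fun i _ => ?_
  have hi : i ∉ (Finset.univ : Finset (Fin n)).erase i := Finset.notMem_erase i _
  rw [powEsymm, ← Finset.insert_erase (Finset.mem_univ i), Finset.powersetCard_succ_insert hi,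
    Finset.sum_union, mul_add, Finset.insert_erase (Finset.mem_univ i), Finset.mul_sum]
  · congr 1
    rw [Finset.sum_image, Finset.mul_sum]
    · refine Finset.sum_congr rfl fun S hS => ?_
      have hiS : i ∉ S := fun h => hi ((Finset.mem_powersetCard.1 hS).1 h)
      rw [Finset.prod_insert hiS]
      ring
    · intro S hS T hT h
      have hiS : i ∉ S := fun h => hi ((Finset.mem_powersetCard.1 hS).1 h)
      have hiT : i ∉ T := fun h => hi ((Finset.mem_powersetCard.1 hT).1 h)
      rw [← Finset.erase_insert hiS, ← Finset.erase_insert hiT]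
      exact congrArg (fun U => Finset.erase U i) h
  · rw [Finset.disjoint_left]
    intro S hS hS'
    obtain ⟨T, _, rfl⟩ := Finset.mem_image.1 hS'
    exact hi ((Finset.mem_powersetCard.1 hS).1 (Finset.mem_insert_self _ _))

open MvPolynomial in
theorem hookSum_zero (n b c : ℕ) : hookSum n b 0 c = psum (Fin n) ℤ c := by
  simp [hookSum, psum]

open MvPolynomial in
theorem powEsymm_isSymmetric (n b m : ℕ) : (powEsymm n b m).IsSymmetric := by
  have h : powEsymm n b m = expand b (esymm (Fin n) ℤ m) := by
    simp [powEsymm, esymm, map_sum, map_prod]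
  intro e
  rw [h, ← AlgHom.comp_apply, rename_comp_expand, AlgHom.comp_apply, esymm_isSymmetric]

open MvPolynomial in
theorem hookSum_isSymmetric (n b m c : ℕ) : (hookSum n b m c).IsSymmetric := by
  induction m generalizing c with
  | zero => rw [hookSum_zero]; exact psum_isSymmetric _ _ _
  | succ m ih =>
    rw [← add_sub_cancel_right (hookSum n b (m + 1) c) (hookSum n b m (c + b)),
      ← psum_mul_powEsymm]
    exact ((psum_isSymmetric _ _ _).mul (powEsymm_isSymmetric _ _ _)).sub (ih _)

/-- A monomial with exponents `d` has exponent multiset `b, …, b, c` exactly when `d` takes the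
value `c` at one index, `b` on a set of `m` other indices, and `0` elsewhere. -/
theorem msymmM_eq_hookSum (n b m c : ℕ) (hb : 0 < b) (hc : 0 < c) (hbc : b ≠ c) :
    msymmM n ℤ (Multiset.replicate m b + {c}) = hookSum n b m c := by
  rw [msymmM, hookSum, ← Finset.sum_filter, Finset.sum_sigma', eq_comm]
  set N := (Multiset.replicate m b + {c}).sum with hN
  have hNv : N = m * b + c := by simp [hN]
  have hcN : c < N + 1 := by omega
  have hbN : ∀ S : Finset (Fin n), S.card = m → ∀ j ∈ S, b < N + 1 := by
    intro S hS j hj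
    have : 0 < m := hS ▸ Finset.card_pos.2 ⟨j, hj⟩
    have := Nat.le_mul_of_pos_left b this
    omega
  let f : (Σ _ : Fin n, Finset (Fin n)) → Fin n → Fin (N + 1) := fun p j =>
    if j = p.1 then Fin.ofNat (N + 1) c else if j ∈ p.2 then Fin.ofNat (N + 1) b else 0
  have hf : ∀ p : (Σ _ : Fin n, Finset (Fin n)), p.2.card = m → ∀ j,
      (f p j : ℕ) = if j = p.1 then c else if j ∈ p.2 then b else 0 := by
    intro p hp j
    dsimp only [f]
    split_ifs with h1 h2
    · simp [Nat.mod_eq_of_lt hcN]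
    · simp [Nat.mod_eq_of_lt (hbN _ hp j h2)]
    · simp
  have hmem : ∀ p ∈ (Finset.univ : Finset (Fin n)).sigma
      (fun i => (Finset.univ.erase i).powersetCard m), p.1 ∉ p.2 ∧ p.2.card = m := by
    rintro ⟨i, S⟩ h
    simp only [Finset.mem_sigma, Finset.mem_univ, true_and, Finset.mem_powersetCard] at h
    exact ⟨fun hi => Finset.notMem_erase i _ (h.1 hi), h.2⟩
  refine Finset.sum_bij (fun p _ => f p) ?_ ?_ ?_ ?_
  · rintro ⟨i, S⟩ h
    obtain ⟨hi, hS⟩ := hmem _ h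
    dsimp only at hi hS
    rw [Finset.mem_filter]
    refine ⟨Finset.mem_univ _, ?_⟩
    have hsupp : (Finset.univ : Finset (Fin n)).filter (fun j => (f ⟨i, S⟩ j : ℕ) ≠ 0)
        = insert i S := by
      ext j
      simp only [hf ⟨i, S⟩ hS, Finset.mem_filter, Finset.mem_univ, true_and, Finset.mem_insert]
      split_ifs <;> simp_all <;> omega
    rw [Multiset.filter_map]
    have h2 := congrArg Finset.val hsupp
    rw [Finset.filter_val] at h2
    simp only [Function.comp_def]
    rw [h2, Finset.insert_val_of_notMem hi, Multiset.map_cons, hf ⟨i, S⟩ hS, if_pos rfl,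
      add_comm (Multiset.replicate m b) {c}, Multiset.singleton_add]
    congr 1
    rw [← hS, Finset.card_def, ← Multiset.map_const']
    refine Multiset.map_congr rfl fun j hj => ?_
    have hjS : j ∈ S := hj
    rw [hf ⟨i, S⟩ hS, if_neg (by rintro rfl; exact hi hjS), if_pos hjS]
  · rintro ⟨i, S⟩ h ⟨i', S'⟩ h' heq
    obtain ⟨hi, hS⟩ := hmem _ h
    obtain ⟨hi', hS'⟩ := hmem _ h'
    dsimp only at hi hS hi' hS'
    have key : ∀ j, (if j = i then c else if j ∈ S then b else 0)
        = if j = i' then c else if j ∈ S' then b else 0 := by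
      intro j
      rw [← hf ⟨i, S⟩ hS, ← hf ⟨i', S'⟩ hS']
      exact congrArg Fin.val (congrFun heq j)
    have hii : i = i' := by
      have := key i
      by_contra hne
      rw [if_pos rfl, if_neg hne] at this
      split_ifs at this <;> omega
    subst hii
    have : S = S' := by
      ext j
      have := key j
      by_cases hj : j = i
      · subst hj; simp [hi, hi']
      · rw [if_neg hj, if_neg hj] at this
        split_ifs at this <;> first | omega | simp_all
    rw [this]
  · intro d hd
    have hd := (Finset.mem_filter.1 hd).2
    rw [Multiset.filter_map] at hd
    simp only [Function.comp_def] at hd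
    have hcount : ∀ v, v ≠ 0 → (Finset.univ.filter fun j => (d j : ℕ) = v).card =
        Multiset.count v (Multiset.replicate m b + {c}) := by
      intro v hv
      rw [← hd, Multiset.count_map, Multiset.filter_filter, Finset.card_def, Finset.filter_val]
      congr 1
      refine Multiset.filter_congr fun j _ => ?_
      constructor
      · rintro rfl; exact ⟨rfl, hv⟩
      · exact fun h => h.1.symm
    have hval : ∀ j, (d j : ℕ) = 0 ∨ (d j : ℕ) = b ∨ (d j : ℕ) = c := by
      intro j
      by_cases h0 : (d j : ℕ) = 0
      · exact Or.inl h0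
      · right
        have : (d j : ℕ) ∈ Multiset.replicate m b + {c} := by
          rw [← hd]
          exact Multiset.mem_map.2 ⟨j, Multiset.mem_filter.2 ⟨Finset.mem_univ j, h0⟩, rfl⟩
        rcases Multiset.mem_add.1 this with h | h
        · exact Or.inl (Multiset.eq_of_mem_replicate h)
        · exact Or.inr (Multiset.mem_singleton.1 h)
    have h1 := hcount c hc.ne'
    have h2 := hcount b hb.ne'
    simp only [Multiset.count_add, Multiset.count_replicate, Multiset.count_singleton, if_neg hbc,
      if_true, zero_add, add_zero] at h1 h2
    obtain ⟨i, hi⟩ := Finset.card_eq_one.1 h1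
    have hi' : ∀ j, (d j : ℕ) = c ↔ j = i := by
      intro j
      have := congrArg (j ∈ ·) hi
      simpa using this
    refine ⟨⟨i, Finset.univ.filter fun j => (d j : ℕ) = b⟩, ?_, ?_⟩
    · simp only [Finset.mem_sigma, Finset.mem_univ, true_and, Finset.mem_powersetCard]
      refine ⟨fun j hj => ?_, h2⟩
      rw [Finset.mem_filter] at hj
      refine Finset.mem_erase.2 ⟨?_, Finset.mem_univ _⟩
      intro h
      have := (hi' j).2 h
      omega
    · funext j
      apply Fin.ext
      refine (hf ⟨i, Finset.univ.filter fun j => (d j : ℕ) = b⟩ h2 j).trans ?_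
      simp only [Finset.mem_filter, Finset.mem_univ, true_and, ← hi' j]
      rcases hval j with h | h | h <;> split_ifs <;> omega
  · rintro ⟨i, S⟩ h
    obtain ⟨hi, hS⟩ := hmem _ h
    dsimp only at hi hS
    rw [MvPolynomial.monomial_eq, map_one, one_mul, Finsupp.prod_fintype _ _ (by simp)]
    simp only [Finsupp.equivFunOnFinite_symm_apply_apply, hf ⟨i, S⟩ hS]
    rw [← Finset.prod_subset (Finset.subset_univ (insert i S)), Finset.prod_insert hi, if_pos rfl]
    · congr 1
      refine Finset.prod_congr rfl fun j hj => ?_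
      rw [if_neg (by rintro rfl; exact hi hj), if_pos hj]
    · intro j _ hj
      rw [Finset.mem_insert, not_or] at hj
      rw [if_neg hj.1, if_neg hj.2, pow_zero]

/-- The specialization `X_i ↦ X`, `X_j ↦ 0` for `j ≠ i`. -/
noncomputable def specAt {n : ℕ} (i : Fin n) : MvPolynomial (Fin n) ℤ →ₐ[ℤ] Polynomial ℤ :=
  MvPolynomial.aeval (fun j => if j = i then Polynomial.X else 0)

theorem coeff_specAt {n : ℕ} (i : Fin n) (p : MvPolynomial (Fin n) ℤ) :
    (specAt i p).coeff 1 = p.coeff (Finsupp.single i 1) := by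
  induction p using MvPolynomial.induction_on' with
  | add p q hp hq => rw [map_add, Polynomial.coeff_add, MvPolynomial.coeff_add, hp, hq]
  | monomial s a =>
    rw [specAt, MvPolynomial.aeval_monomial, MvPolynomial.coeff_monomial,
      Finsupp.prod_fintype _ _ (by simp)]
    by_cases h : ∃ j, j ≠ i ∧ s j ≠ 0
    · obtain ⟨j, hji, hj⟩ := h
      rw [Finset.prod_eq_zero (Finset.mem_univ j) (by simp [hji, hj]), if_neg]
      · simp
      · rintro rfl
        exact hj (Finsupp.single_eq_of_ne hji)
    · push Not at h
      have hs : s = Finsupp.single i (s i) := by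
        ext j
        by_cases hj : j = i
        · subst hj; simp
        · rw [h j hj, Finsupp.single_eq_of_ne hj]
      rw [Finset.prod_eq_single i (fun j _ hj => by simp [h j hj]) (by simp), if_pos rfl, hs]
      simp [Polynomial.coeff_X_pow, (Finsupp.single_injective i).eq_iff, eq_comm]

open MvPolynomial in
/-- Symmetric polynomials, written in the elementary ones, followed by the specialization
`e_{i+1} ↦ X`, `e_{j+1} ↦ 0` for `j ≠ i`. -/
noncomputable def symSpec {n : ℕ} (i : Fin n) :
    symmetricSubalgebra (Fin n) ℤ →ₐ[ℤ] Polynomial ℤ :=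
  (specAt i).comp (esymmAlgEquiv (Fin n) ℤ (Fintype.card_fin n)).symm.toAlgHom

open MvPolynomial in
theorem symSpec_esymm {n : ℕ} (i : Fin n) (k : ℕ) (hk : 0 < k) (hkn : k ≤ n) :
    symSpec i ⟨esymm (Fin n) ℤ k, esymm_isSymmetric _ _ _⟩ =
      if k = i + 1 then Polynomial.X else 0 := by
  obtain ⟨k, rfl⟩ : ∃ l, k = l + 1 := ⟨k - 1, by omega⟩
  have := esymmAlgEquiv_symm_apply (σ := Fin n) (R := ℤ) (Fintype.card_fin n) ⟨k, by omega⟩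
  simp only [symSpec, AlgHom.comp_apply]
  erw [this]
  simp [specAt, Fin.ext_iff]

open MvPolynomial in
/-- In Newton's identity for `p_k` all products vanish when `k ≤ i + 1`, since they involve
some `e_l` with `0 < l < i + 1`. -/
theorem symSpec_psum {n : ℕ} (i : Fin n) (k : ℕ) (hk : 0 < k) (hki : k ≤ i + 1) :
    symSpec i ⟨psum (Fin n) ℤ k, psum_isSymmetric _ _ _⟩ =
      if k = i + 1 then (-1) ^ (k + 1) * (k : Polynomial ℤ) * Polynomial.X else 0 := by
  have hin := i.isLt
  have hN : (⟨psum (Fin n) ℤ k, psum_isSymmetric _ _ _⟩ : symmetricSubalgebra (Fin n) ℤ) =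
      (-1) ^ (k + 1) * (k : symmetricSubalgebra (Fin n) ℤ) *
        ⟨esymm (Fin n) ℤ k, esymm_isSymmetric _ _ _⟩ -
      ∑ a ∈ Finset.HasAntidiagonal.antidiagonal k with a.1 ∈ Set.Ioo 0 k,
        (-1) ^ a.1 * ⟨esymm (Fin n) ℤ a.1, esymm_isSymmetric _ _ _⟩ *
          ⟨psum (Fin n) ℤ a.2, psum_isSymmetric _ _ _⟩ := by
    apply Subtype.ext
    push_cast
    convert psum_eq_mul_esymm_sub_sum (Fin n) ℤ k hk
  rw [hN, map_sub, map_sum, Finset.sum_eq_zero, sub_zero]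
  · simp only [map_mul, map_pow, map_neg, map_one, map_natCast,
      symSpec_esymm i k hk (by omega)]
    split_ifs <;> simp
  · intro a ha
    have ha := (Finset.mem_filter.1 ha).2
    rw [Set.mem_Ioo] at ha
    rw [map_mul, map_mul, symSpec_esymm i a.1 ha.1 (by omega), if_neg (by omega)]
    simp

open MvPolynomial in
theorem symSpec_hookSum {n : ℕ} (i : Fin n) (b m c : ℕ) (hb : 0 < b) (hc : 0 < c)
    (h : m * b + c = i + 1) :
    symSpec i ⟨hookSum n b m c, hookSum_isSymmetric n b m c⟩ =
      (-1) ^ (i + 1 + m + 1) * ((i + 1 : ℕ) : Polynomial ℤ) * Polynomial.X := by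
  induction m generalizing c with
  | zero =>
    have hc' : c = i + 1 := by omega
    have := symSpec_psum i c hc hc'.le
    rw [if_pos hc', hc'] at this
    simp only [hookSum_zero, hc']
    exact this
  | succ m ih =>
    have hlt : c < i + 1 := by
      have : 0 < (m + 1) * b := by positivity
      omega
    have hrec : (⟨hookSum n b (m + 1) c, hookSum_isSymmetric _ _ _ _⟩ :
        symmetricSubalgebra (Fin n) ℤ) =
        ⟨psum (Fin n) ℤ c, psum_isSymmetric _ _ _⟩ *
          ⟨powEsymm n b (m + 1), powEsymm_isSymmetric _ _ _⟩ -
        ⟨hookSum n b m (c + b), hookSum_isSymmetric _ _ _ _⟩ := by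
      apply Subtype.ext
      push_cast
      rw [psum_mul_powEsymm, add_sub_cancel_right]
    rw [hrec, map_sub, map_mul, symSpec_psum i c hc hlt.le, if_neg hlt.ne,
      ih (c + b) (by omega) (by rw [← h]; ring)]
    ring

theorem stmt3 (b c m w : ℕ) (hb : 0 < b) (hc : 0 < c) (hm : 0 < m) (hw : 0 < w)
    (hsum : m * b + c = w) (hbc : b ≠ c)
    (n : ℕ) (hn : w ≤ n)
    -- `ψ` is the unique polynomial with `m_μ = ψ(e_1,…,e_n)`, where `μ` consists of
    -- `m` copies of `b` and one copy of `c`.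
    (ψ : MvPolynomial (Fin n) ℤ)
    (hψ : MvPolynomial.aeval (fun i : Fin n => MvPolynomial.esymm (Fin n) ℤ ((i : ℕ) + 1)) ψ =
      msymmM n ℤ (Multiset.replicate m b + {c})) :
    -- the coefficient `d_{λμ}` of the monomial `X_w` in `ψ` equals `(-1)^(w+m+1)·w`
    ψ.coeff (Finsupp.single (⟨w - 1, by omega⟩ : Fin n) 1) = (-1) ^ (w + m + 1) * (w : ℤ) := by
  set i : Fin n := ⟨w - 1, by omega⟩ with hi
  have hiw : (i : ℕ) + 1 = w := by simp only [hi]; omega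
  rw [msymmM_eq_hookSum n b m c hb hc hbc] at hψ
  have hE : MvPolynomial.esymmAlgEquiv (Fin n) ℤ (Fintype.card_fin n) ψ =
      ⟨hookSum n b m c, hookSum_isSymmetric n b m c⟩ := by
    apply Subtype.ext
    exact (MvPolynomial.esymmAlgHom_apply ..).trans hψ
  have key := symSpec_hookSum i b m c hb hc (hsum.trans hiw.symm)
  rw [← hE] at key
  have h2 : symSpec i (MvPolynomial.esymmAlgEquiv (Fin n) ℤ (Fintype.card_fin n) ψ) =
      specAt i ψ :=
    congrArg (specAt i)
      ((MvPolynomial.esymmAlgEquiv (Fin n) ℤ (Fintype.card_fin n)).symm_apply_apply ψ)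
  rw [h2, hiw] at key
  rw [← coeff_specAt, key]
  have hC : (-1) ^ (w + m + 1) * (w : Polynomial ℤ) =
      Polynomial.C ((-1) ^ (w + m + 1) * (w : ℤ)) := by simp
  rw [hC, Polynomial.coeff_C_mul, Polynomial.coeff_X_one, mul_one]
end

section
/- Let a, b, ℓ, m, w be positive integers such that ℓa = mb = w. Let λ be the partition of w consisting of ℓ copies of a and let μ be the partition of w consisting of m copies of b. Set u = gcd(a,b) and v = gcd(ℓ,m). Then for every n ≥ w, the coefficient d_{λμ} of the monomial X_a^ℓ in ψ_μ ∈ ℤ[X_1,…,X_n] equals (−1)^{w−v+ℓ+m}·C(u,v), where C(u,v) is the binomial coefficient. In particular, if u < v then d_{λμ} = 0. -/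
/-!
The coefficient of `X_a ^ l` in `ψ` is read off from a specialization in which every elementary
symmetric polynomial `e_k` with `1 ≤ k ≤ n`, `k ≠ a`, vanishes. In `ℂ[s]` take the point whose
coordinates are `ζ ^ i * s` for `i < a`, with `ζ` a primitive `a`-th root of unity, and `0` for
`a ≤ i < n`. There `e_a` becomes `-(-s) ^ a`, so `ψ(e_1, …, e_n)` becomes a polynomial in `s` whose
coefficient at `s ^ w`, `w = l * a`, is the wanted coefficient up to sign (`coeff_aeval_single`).

The monomial symmetric polynomial of `m` copies of `b` is `e_m(X_1 ^ b, …, X_n ^ b)`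
(`msymmM_replicate`). At the point above, the `b`-th powers of the coordinates run `u = gcd a b`
times through the `p`-th roots of unity multiplied by `s ^ b`, where `p = a / u`, so that
`∏ (Y + x_i ^ b) = Y ^ (n - a) * (Y ^ p - (-s ^ b) ^ p) ^ u`. As `m = p * v` with `v = gcd l m`,
the binomial theorem gives `e_m = (-(-s ^ b) ^ p) ^ v * C(u, v)` (`sum_powersetCard_rootPoint`).
The same formula with `b = 1` evaluates the `e_k`. Comparing the coefficients at `s ^ w` gives
the result.
-/

open scoped Classical

open Polynomial in
/-- The product of a sequence of period `p` over `u` periods is a `u`-th power; the factors of one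
period multiply to `Y ^ p - (-c) ^ p`. -/
theorem prod_range_root {R : Type*} [CommRing R] [IsDomain R] {p : ℕ} (hp : 0 < p) {η : R}
    (hη : IsPrimitiveRoot η p) (c : R) (u : ℕ) :
    ∏ i ∈ Finset.range (p * u), (X + C (η ^ i * c)) = (X ^ p - C ((-c) ^ p)) ^ u := by
  induction u with
  | zero => simp
  | succ u ih =>
    rw [Nat.mul_succ, Finset.prod_range_add, ih, pow_succ, X_pow_sub_C_eq_prod hη hp rfl]
    congr 1
    refine Finset.prod_congr rfl fun i _ => ?_
    rw [pow_add, pow_mul, hη.pow_eq_one, one_pow, one_mul, mul_neg, C_neg, sub_neg_eq_add]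

open Polynomial in
theorem coeff_X_pow_mul_sub_pow {R : Type*} [CommRing R] {p u n k : ℕ} (hp : 0 < p)
    (hn : p * u ≤ n) (hk : k ≤ n) (α : R) :
    (X ^ (n - p * u) * (X ^ p - C α) ^ u : R[X]).coeff (n - k) =
      if p ∣ k then (-α) ^ (k / p) * (u.choose (k / p) : R) else 0 := by
  have h1 : (X ^ p - C α : R[X]) ^ u = expand R p ((X + C (-α)) ^ u) := by
    simp [sub_eq_add_neg]
  rw [h1, coeff_X_pow_mul', coeff_expand hp, coeff_X_add_C_pow]
  by_cases hku : k ≤ p * u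
  · rw [if_pos (by omega)]
    have h2 : n - k - (n - p * u) = p * u - k := by omega
    rw [h2]
    by_cases hd : p ∣ k
    · obtain ⟨j, rfl⟩ := hd
      have hj : j ≤ u := Nat.le_of_mul_le_mul_left hku hp
      rw [← Nat.mul_sub, if_pos (Dvd.intro _ rfl), if_pos (Dvd.intro _ rfl),
        Nat.mul_div_cancel_left _ hp, Nat.mul_div_cancel_left _ hp, Nat.choose_symm hj,
        Nat.sub_sub_self hj]
    · rw [if_neg hd, if_neg]
      intro h
      exact hd ((Nat.dvd_sub_iff_right hku (Dvd.intro _ rfl)).1 h)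
  · rw [if_neg (by omega)]
    split_ifs with hd
    · obtain ⟨j, rfl⟩ := hd
      rw [Nat.mul_div_cancel_left _ hp, Nat.choose_eq_zero_of_lt]
      · simp
      · by_contra h
        exact hku (Nat.mul_le_mul_left p (not_lt.1 h))
    · rfl

open Polynomial in
/-- The elementary symmetric functions of `n` elements of which `p * u` are the `η ^ i * c`
(each value occurring `u` times, `η` a primitive `p`-th root of unity) and the others vanish. -/
theorem sum_powersetCard_rootPoint {R : Type*} [CommRing R] [IsDomain R] {p u n k : ℕ}
    (hp : 0 < p) (hn : p * u ≤ n) (hk : k ≤ n) {η : R} (hη : IsPrimitiveRoot η p) (c : R)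
    (y : Fin n → R) (hy : ∀ i : Fin n, y i = if (i : ℕ) < p * u then η ^ (i : ℕ) * c else 0) :
    ∑ t ∈ Finset.powersetCard k Finset.univ, ∏ i ∈ t, y i =
      if p ∣ k then (-(-c) ^ p) ^ (k / p) * (u.choose (k / p) : R) else 0 := by
  have hV := Finset.prod_X_add_C_coeff (Finset.univ : Finset (Fin n)) y (k := n - k) (by simp)
  rw [Finset.card_univ, Fintype.card_fin, Nat.sub_sub_self hk] at hV
  rw [← hV, ← coeff_X_pow_mul_sub_pow hp hn hk]
  congr 1
  simp_rw [hy]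
  rw [Fin.prod_univ_eq_prod_range
    (fun i => X + C (if i < p * u then η ^ i * c else 0)) n]
  obtain ⟨d, rfl⟩ := Nat.exists_eq_add_of_le hn
  rw [Finset.prod_range_add, ← prod_range_root hp hη, mul_comm]
  congr 1
  · simp
  · refine Finset.prod_congr rfl fun i hi => ?_
    rw [if_pos (Finset.mem_range.1 hi)]

/-- The monomial symmetric polynomial of `m` copies of `b` is `e_m` in the `b`-th powers of the
variables. -/
theorem msymmM_replicate (n m b : ℕ) (hb : 0 < b) (hm : 0 < m) :
    msymmM n ℤ (Multiset.replicate m b) =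
      ∑ t ∈ Finset.powersetCard m (Finset.univ : Finset (Fin n)),
        ∏ i ∈ t, (MvPolynomial.X i : MvPolynomial (Fin n) ℤ) ^ b := by
  have hbs : b < (Multiset.replicate m b).sum + 1 := by
    simp only [Multiset.sum_replicate, smul_eq_mul]
    have := Nat.le_mul_of_pos_left b hm
    omega
  unfold msymmM
  rw [← Finset.sum_filter]
  symm
  refine Finset.sum_bij
    (fun t _ i => if i ∈ t then ⟨b, hbs⟩ else ⟨0, by omega⟩) ?_ ?_ ?_ ?_
  · intro t ht
    rw [Finset.mem_powersetCard] at ht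
    simp only [Finset.mem_filter, Finset.mem_univ, true_and]
    rw [Multiset.filter_map, Multiset.eq_replicate]
    refine ⟨?_, ?_⟩
    · rw [Multiset.card_map]
      refine Eq.trans ?_ ht.2
      change (Finset.univ.filter _).card = _
      congr 1
      ext i
      rw [Finset.mem_filter]
      by_cases hi : i ∈ t <;> simp [hi, hb.ne']
    · intro c hc
      simp only [Multiset.mem_map, Multiset.mem_filter, Function.comp] at hc
      obtain ⟨i, ⟨_, h1⟩, h2⟩ := hc
      by_cases hi : i ∈ t
      · simpa [hi] using h2.symm
      · simp [hi] at h1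
  · intro s _ t _ h
    ext i
    have := congrArg Fin.val (congrFun h i)
    by_cases h1 : i ∈ s <;> by_cases h2 : i ∈ t <;> simp [h1, h2] at this ⊢ <;> omega
  · intro d hd
    simp only [Finset.mem_filter, Finset.mem_univ, true_and] at hd
    have hval : ∀ i, (d i : ℕ) ≠ 0 → (d i : ℕ) = b := by
      intro i hi
      apply Multiset.eq_of_mem_replicate (n := m)
      have hmem := (Multiset.mem_filter (p := fun x => x ≠ 0)).2
        ⟨Multiset.mem_map_of_mem (fun i => (d i : ℕ)) (Finset.mem_univ_val i), hi⟩
      exact Multiset.mem_of_le hd.le hmem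
    refine ⟨Finset.univ.filter fun i => (d i : ℕ) ≠ 0, ?_, ?_⟩
    · rw [Finset.mem_powersetCard]
      refine ⟨Finset.subset_univ _, ?_⟩
      have := congrArg Multiset.card hd
      rw [Multiset.filter_map, Multiset.card_map, Multiset.card_replicate] at this
      exact this
    · funext i
      apply Fin.ext
      by_cases hi : (d i : ℕ) = 0
      · rw [if_neg (by simpa only [Finset.mem_filter, not_and, not_not] using fun _ => hi)]
        exact hi.symm
      · rw [if_pos (Finset.mem_filter.2 ⟨Finset.mem_univ i, hi⟩)]
        exact (hval i hi).symm
  · intro t _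
    rw [MvPolynomial.monomial_eq, Finsupp.prod_fintype _ _ (by simp)]
    simp only [MvPolynomial.C_1, one_mul, Finsupp.equivFunOnFinite_symm_apply_apply]
    rw [← Finset.prod_subset (Finset.subset_univ t)]
    · exact Finset.prod_congr rfl fun i hi => by simp [hi]
    · intro i _ hi
      simp [hi]

open Polynomial in
/-- Substituting `q * s ^ a` for one variable and `0` for all others isolates the powers of that
variable. -/
theorem coeff_aeval_single {n a l : ℕ} (ha : 0 < a) (ψ : MvPolynomial (Fin n) ℤ) (i₀ : Fin n)
    (q : ℂ) (g : Fin n → ℂ[X]) (h₀ : g i₀ = C q * X ^ a) (h : ∀ i, i ≠ i₀ → g i = 0) :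
    (MvPolynomial.aeval g ψ).coeff (l * a) =
      ((ψ.coeff (Finsupp.single i₀ l) : ℤ) : ℂ) * q ^ l := by
  rw [MvPolynomial.aeval_def, MvPolynomial.eval₂_eq', Polynomial.finsetSum_coeff,
    Finset.sum_eq_single (Finsupp.single i₀ l)]
  · rw [Finset.prod_eq_single i₀ (fun j _ hj => by simp [Finsupp.single_eq_of_ne hj])
      (by simp), h₀, Finsupp.single_eq_same, mul_pow, ← pow_mul, ← C_pow, mul_comm a l]
    simp [-map_pow]
  · intro d _ hd
    by_cases hs : ∃ i, i ≠ i₀ ∧ d i ≠ 0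
    · obtain ⟨i, hi, hdi⟩ := hs
      rw [Finset.prod_eq_zero (Finset.mem_univ i) (by rw [h i hi, zero_pow hdi])]
      simp
    · push Not at hs
      have hl : d i₀ ≠ l := by
        rintro rfl
        apply hd
        ext i
        by_cases hi : i = i₀
        · simp [hi]
        · rw [hs i hi, Finsupp.single_eq_of_ne hi]
      rw [Finset.prod_eq_single i₀ (fun j _ hj => by simp [hs j hj]) (by simp), h₀, mul_pow,
        ← pow_mul, ← C_pow]
      have hne : l * a ≠ a * d i₀ := by
        rw [mul_comm]
        exact fun e => hl (Nat.eq_of_mul_eq_mul_left ha e).symm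
      simp [coeff_X_pow, hne, -map_pow]
  · intro hd
    rw [MvPolynomial.notMem_support_iff.1 hd]
    simp

open Polynomial in
/-- The coefficient comparison, with `a = p * u`, `b = p' * u`, `l = p' * v`, `m = p * v`. -/
theorem coeff_mul_sign {p p' u v n : ℕ} (hp : 0 < p) (hp' : 0 < p') (hu : 0 < u) (hv : 0 < v)
    (hco : Nat.Coprime p p') (hn : p' * v * (p * u) ≤ n) (ψ : MvPolynomial (Fin n) ℤ)
    (hψ : MvPolynomial.aeval (fun i : Fin n => MvPolynomial.esymm (Fin n) ℤ ((i : ℕ) + 1)) ψ =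
      msymmM n ℤ (Multiset.replicate (p * v) (p' * u)))
    (i₀ : Fin n) (hi₀ : (i₀ : ℕ) + 1 = p * u) :
    ψ.coeff (Finsupp.single i₀ (p' * v)) * (-(-1) ^ (p * u)) ^ (p' * v) =
      (-(-1) ^ p) ^ v * (u.choose v : ℤ) := by
  have ha : 0 < p * u := Nat.mul_pos hp hu
  have hb : 0 < p' * u := Nat.mul_pos hp' hu
  have han : p * u ≤ n := le_trans (Nat.le_mul_of_pos_left _ (Nat.mul_pos hp' hv)) hn
  have hmn : p * v ≤ n := by
    refine le_trans ?_ hn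
    calc p * v ≤ p * v * (p' * u) := Nat.le_mul_of_pos_right _ hb
      _ = _ := by ring
  have hζ := Complex.isPrimitiveRoot_exp (p * u) ha.ne'
  generalize Complex.exp (2 * Real.pi * Complex.I / ((p * u : ℕ) : ℂ)) = ζ at hζ
  have hζC : IsPrimitiveRoot (C ζ : ℂ[X]) (p * u) := hζ.map_of_injective C_injective
  have hηC : IsPrimitiveRoot ((C ζ : ℂ[X]) ^ (p' * u)) p := by
    have h1 : IsPrimitiveRoot ((C ζ : ℂ[X]) ^ u) p := hζC.pow ha (mul_comm p u)
    rw [mul_comm p' u, pow_mul]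
    exact h1.pow_of_coprime _ hco.symm
  let x : Fin n → ℂ[X] := fun i => if (i : ℕ) < p * u then (C ζ) ^ (i : ℕ) * X else 0
  have hE : ∀ k, k ≤ n → MvPolynomial.aeval x (MvPolynomial.esymm (Fin n) ℤ k) =
      if p * u ∣ k then (-(-X) ^ (p * u)) ^ (k / (p * u)) *
        (Nat.choose 1 (k / (p * u)) : ℂ[X]) else 0 := by
    intro k hk
    rw [← sum_powersetCard_rootPoint (u := 1) ha (by simpa using han) hk hζC X x
      (fun i => by simp [x])]
    simp [MvPolynomial.esymm]
  have hM : MvPolynomial.aeval x (msymmM n ℤ (Multiset.replicate (p * v) (p' * u))) =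
      (-(-X ^ (p' * u)) ^ p) ^ v * (u.choose v : ℂ[X]) := by
    have := sum_powersetCard_rootPoint (u := u) hp han hmn hηC (X ^ (p' * u))
      (fun i => x i ^ (p' * u)) (fun i => by
        by_cases hi : (i : ℕ) < p * u
        · simp only [x, hi, if_true, mul_pow]
          rw [← pow_mul, ← pow_mul, mul_comm (i : ℕ)]
        · simp [x, hi, hp'.ne', hu.ne'])
    rw [if_pos (Dvd.intro _ rfl), Nat.mul_div_cancel_left _ hp] at this
    rw [← this, msymmM_replicate n _ _ hb (Nat.mul_pos hp hv)]
    simp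
  have key := congrArg (fun f => (MvPolynomial.aeval x f).coeff (p' * v * (p * u))) hψ
  rw [hM, ← AlgHom.comp_apply, MvPolynomial.comp_aeval,
    coeff_aeval_single ha ψ i₀ (-(-1) ^ (p * u))] at key
  · have hR : (-(-X ^ (p' * u)) ^ p) ^ v * (u.choose v : ℂ[X]) =
        C ((-(-1) ^ p) ^ v * (u.choose v : ℂ)) * X ^ (p' * v * (p * u)) := by
      have h1 : -(-X ^ (p' * u) : ℂ[X]) ^ p = -(-1) ^ p * X ^ (p' * u * p) := by
        rw [neg_pow, pow_mul X (p' * u) p]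
        ring
      rw [h1, mul_pow, ← pow_mul]
      simp only [map_mul, map_pow, map_neg, map_one, map_natCast]
      have h2 : p' * u * p * v = p' * v * (p * u) := by ring
      rw [h2]
      ring
    rw [hR, coeff_C_mul, coeff_X_pow_self, mul_one] at key
    exact_mod_cast key
  · rw [hE _ (by omega), hi₀, if_pos dvd_rfl, Nat.div_self ha, neg_pow (X : ℂ[X])]
    simp
  · intro i hi
    rw [hE _ (by omega)]
    split_ifs with hd
    · -- a multiple of `p * u` other than `p * u` itself, so the binomial coefficient vanishes
      obtain ⟨j, hj⟩ := hd
      rw [hj, Nat.mul_div_cancel_left _ ha, Nat.choose_eq_zero_of_lt]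
      · simp
      · by_contra hj1
        have : j = 0 ∨ j = 1 := by omega
        rcases this with rfl | rfl
        · simp at hj
        · exact hi (Fin.ext (by omega))
    · rfl

theorem stmt4 (a b l m w : ℕ) (ha : 0 < a) (hb : 0 < b) (hl : 0 < l) (hm : 0 < m)
    (hw : 0 < w) (hla : l * a = w) (hmb : m * b = w)
    (n : ℕ) (hn : w ≤ n)
    -- `ψ` is the unique polynomial with `m_μ = ψ(e_1,…,e_n)`, where `μ` consists of
    -- `m` copies of `b`.
    (ψ : MvPolynomial (Fin n) ℤ)
    (hψ : MvPolynomial.aeval (fun i : Fin n => MvPolynomial.esymm (Fin n) ℤ ((i : ℕ) + 1)) ψ =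
      msymmM n ℤ (Multiset.replicate m b)) :
    -- the coefficient `d_{λμ}` of `X_a^l` in `ψ` equals `(-1)^(w-v+l+m)·C(u,v)` where
    -- `u = gcd(a,b)`, `v = gcd(l,m)`; in particular if `u < v` then `d_{λμ} = 0`.
    ψ.coeff (Finsupp.single (⟨a - 1, by have := Nat.le_mul_of_pos_left a hl; omega⟩ : Fin n) l) =
        (-1) ^ (w - Nat.gcd l m + l + m) * (Nat.choose (Nat.gcd a b) (Nat.gcd l m) : ℤ) ∧
      (Nat.gcd a b < Nat.gcd l m →
        ψ.coeff (Finsupp.single (⟨a - 1, by have := Nat.le_mul_of_pos_left a hl; omega⟩ : Fin n) l) = 0) := by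
  have main : ψ.coeff (Finsupp.single
      (⟨a - 1, by have := Nat.le_mul_of_pos_left a hl; omega⟩ : Fin n) l) =
      (-1) ^ (w - Nat.gcd l m + l + m) * (Nat.choose (Nat.gcd a b) (Nat.gcd l m) : ℤ) := by
    have hu : 0 < Nat.gcd a b := Nat.gcd_pos_of_pos_left _ ha
    obtain ⟨p, p', hco, hpa, hpb⟩ := Nat.exists_coprime a b
    generalize Nat.gcd a b = u at *
    subst hpa hpb
    have hp : 0 < p := Nat.pos_of_mul_pos_right ha
    have hp' : 0 < p' := Nat.pos_of_mul_pos_right hb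
    -- `l * p = m * p'` with `p`, `p'` coprime forces `l = p' * v` and `m = p * v`
    have h1 : l * p = m * p' := by
      apply Nat.eq_of_mul_eq_mul_right hu
      rw [mul_assoc, mul_assoc, hla, hmb]
    obtain ⟨v, rfl⟩ : p ∣ m := hco.dvd_of_dvd_mul_right (Dvd.intro_left _ h1)
    obtain rfl : l = p' * v := by
      apply Nat.eq_of_mul_eq_mul_right hp
      rw [h1]
      ring
    have hv : 0 < v := Nat.pos_of_mul_pos_left hl
    have hg : Nat.gcd (p' * v) (p * v) = v := by
      rw [Nat.gcd_mul_right, Nat.Coprime.gcd_eq_one hco.symm, one_mul]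
    rw [hg]
    have key := coeff_mul_sign hp hp' hu hv hco (by rw [hla]; exact hn) ψ hψ
      ⟨p * u - 1, by have := Nat.le_mul_of_pos_left (p * u) hl; omega⟩
      (Nat.sub_add_cancel ha)
    generalize MvPolynomial.coeff _ ψ = c at *
    have hvw : v ≤ w := by
      rw [← hla]
      calc v ≤ p' * v := Nat.le_mul_of_pos_left _ hp'
        _ ≤ _ := Nat.le_mul_of_pos_right _ ha
    have s1 : (-(-1 : ℤ) ^ (p * u)) ^ (p' * v) = (-1) ^ (p' * v + w) := by
      rw [neg_pow, ← pow_mul, ← pow_add, ← hla, mul_comm (p * u)]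
    have s2 : (-(-1 : ℤ) ^ p) ^ v = (-1) ^ (v + p * v) := by
      rw [neg_pow, ← pow_mul, ← pow_add]
    have s3 : (-1 : ℤ) ^ (p' * v + w) * (-1) ^ (p' * v + w) = 1 := by
      rw [← mul_pow]
      simp
    have s4 : (-1 : ℤ) ^ (v + p * v) * (-1) ^ (p' * v + w) =
        (-1) ^ (w - v + p' * v + p * v) := by
      have e : v + p * v + (p' * v + w) = 2 * v + (w - v + p' * v + p * v) := by omega
      rw [← pow_add, e, pow_add, pow_mul]
      simp
    rw [s1, s2] at key
    calc c = c * (-1) ^ (p' * v + w) * (-1) ^ (p' * v + w) := by rw [mul_assoc, s3, mul_one]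
      _ = (-1) ^ (v + p * v) * (-1) ^ (p' * v + w) * (u.choose v : ℤ) := by rw [key]; ring
      _ = _ := by rw [s4]
  refine ⟨main, fun h => ?_⟩
  rw [main, Nat.choose_eq_zero_of_lt h]
  simp
end

section
/- Let k, ℓ ≥ 0 and let F ∈ R_k. Then p^ℓ·F ∈ R_{k+ℓ} and F^{p^ℓ} ∈ R_{k+ℓ}. -/
/-!
`R_k` is described by partial derivatives: `F ∈ R_k` iff `p ^ k ∣ ∂F/∂X_j` for every `j`
(`mem_Rset_iff`). Given this, the theorem is immediate from
`∂(p ^ l * F) = p ^ l * ∂F` and `∂(F ^ (p ^ l)) = p ^ l * F ^ (p ^ l - 1) * ∂F`.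

One direction of the criterion holds because `∂(X_j ^ (p ^ i))` is divisible by `p ^ i`.
For the other, divisibility of all partial derivatives says that each term `a * X ^ m` of `F`
satisfies `p ^ k ∣ a * m_j` for all `j`. If `i ≤ k` is maximal with `p ^ i` dividing all `m_j`,
then `p ^ (k - i) ∣ a`, so the term lies in `p ^ (k - i) * ℤ[X_1 ^ (p ^ i), …, X_n ^ (p ^ i)]`.
-/

open scoped Classical

/-- The subring `R_k = ℤ[X₁^{p^k},…,Xₙ^{p^k}] + p·ℤ[X₁^{p^{k-1}},…,Xₙ^{p^{k-1}}] + ⋯ +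
p^k·ℤ[X₁,…,Xₙ]` of `ℤ[X₁,…,Xₙ]`, viewed as a set. -/
def Rset (p n k : ℕ) : Set (MvPolynomial (Fin n) ℤ) :=
  { F | ∃ g : ℕ → MvPolynomial (Fin n) ℤ,
      F = ∑ i ∈ Finset.range (k + 1),
        (p : MvPolynomial (Fin n) ℤ) ^ (k - i) *
          MvPolynomial.aeval (fun j => MvPolynomial.X j ^ p ^ i) (g i) }

open MvPolynomial in
theorem pow_dvd_pderiv_aeval (p n i : ℕ) (g : MvPolynomial (Fin n) ℤ) (j : Fin n) :
    (p : MvPolynomial (Fin n) ℤ) ^ i ∣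
      pderiv j (aeval (fun j => (X j : MvPolynomial (Fin n) ℤ) ^ p ^ i) g) := by
  induction g using MvPolynomial.induction_on with
  | C a => simp
  | add f g hf hg => simpa only [map_add] using dvd_add hf hg
  | mul_X f s hf =>
    rw [map_mul, aeval_X, pderiv_mul, pderiv_pow]
    refine dvd_add (hf.mul_right _) (Dvd.dvd.mul_left ?_ _)
    push_cast
    rw [mul_assoc]
    exact dvd_mul_right _ _

theorem zero_mem_Rset (p n k : ℕ) : (0 : MvPolynomial (Fin n) ℤ) ∈ Rset p n k :=
  ⟨0, by simp⟩

theorem add_mem_Rset {p n k : ℕ} {F G : MvPolynomial (Fin n) ℤ}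
    (hF : F ∈ Rset p n k) (hG : G ∈ Rset p n k) : F + G ∈ Rset p n k := by
  obtain ⟨f, rfl⟩ := hF
  obtain ⟨g, rfl⟩ := hG
  refine ⟨f + g, ?_⟩
  simp only [Pi.add_apply, map_add, mul_add, Finset.sum_add_distrib]

theorem pow_mul_aeval_mem_Rset {p n k i : ℕ} (hi : i ≤ k) (f : MvPolynomial (Fin n) ℤ) :
    (p : MvPolynomial (Fin n) ℤ) ^ (k - i) *
      MvPolynomial.aeval (fun j => MvPolynomial.X j ^ p ^ i) f ∈ Rset p n k := by
  refine ⟨Pi.single i f, ?_⟩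
  rw [Finset.sum_eq_single i]
  · simp
  · intro b _ hb
    simp [hb]
  · intro h
    exact absurd (Finset.mem_range.2 (by omega)) h

open MvPolynomial in
theorem monomial_mem_Rset {p n k : ℕ} (hp : p.Prime) (m : Fin n →₀ ℕ) (a : ℤ)
    (h : ∀ j, (p : ℤ) ^ k ∣ a * m j) : monomial m a ∈ Rset p n k := by
  -- the largest `i ≤ k` such that `p ^ i` divides every exponent
  set i := Nat.findGreatest (fun i => ∀ j, p ^ i ∣ m j) k with hi
  have hik : i ≤ k := Nat.findGreatest_le k
  have hdvd : ∀ j, p ^ i ∣ m j :=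
    Nat.findGreatest_spec (P := fun i => ∀ j, p ^ i ∣ m j) (Nat.zero_le k) (by simp)
  have ha : (p : ℤ) ^ (k - i) ∣ a := by
    rcases hik.eq_or_lt with hk | hk
    · simp [hk]
    have hmax : ¬ ∀ j, p ^ (i + 1) ∣ m j :=
      Nat.findGreatest_is_greatest (P := fun i => ∀ j, p ^ i ∣ m j) (Nat.lt_succ_self i) hk
    push Not at hmax
    obtain ⟨j, hj⟩ := hmax
    obtain ⟨u, hu⟩ := hdvd j
    have hpu : ¬ p ∣ u := by
      rintro ⟨v, rfl⟩
      exact hj ⟨v, by rw [hu]; ring⟩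
    have hcop : IsCoprime ((p : ℤ) ^ (k - i)) (u : ℤ) :=
      (Nat.isCoprime_iff_coprime.2 ((Nat.Prime.coprime_iff_not_dvd hp).2 hpu)).pow_left
    refine hcop.dvd_of_dvd_mul_right ?_
    have hpi : (p : ℤ) ^ i ≠ 0 := pow_ne_zero _ (by exact_mod_cast hp.ne_zero)
    refine (mul_dvd_mul_iff_left hpi).1 ?_
    have hjk := h j
    rw [hu] at hjk
    rw [← pow_add, Nat.add_sub_cancel' hik]
    have heq : (p : ℤ) ^ i * (a * u) = a * ((p ^ i * u : ℕ) : ℤ) := by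
      push_cast
      ring
    rwa [heq]
  obtain ⟨b, rfl⟩ := ha
  choose e he using hdvd
  convert pow_mul_aeval_mem_Rset (p := p) hik (monomial (Finsupp.equivFunOnFinite.symm e) b) using 1
  rw [aeval_monomial, Finsupp.prod_fintype _ _ (by simp), monomial_eq,
    Finsupp.prod_fintype _ _ (by simp)]
  simp only [he, Finsupp.equivFunOnFinite_symm_apply_apply, pow_mul, map_mul, map_pow,
    algebraMap_eq, mul_assoc]
  simp

/-- `R_k` consists of the polynomials all of whose partial derivatives are divisible by `p ^ k`. -/
theorem mem_Rset_iff {p n k : ℕ} (hp : p.Prime) (F : MvPolynomial (Fin n) ℤ) :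
    F ∈ Rset p n k ↔ ∀ j, (p : MvPolynomial (Fin n) ℤ) ^ k ∣ MvPolynomial.pderiv j F := by
  constructor
  · rintro ⟨g, rfl⟩ j
    rw [map_sum]
    refine Finset.dvd_sum fun i hi => ?_
    have hik : i ≤ k := Nat.lt_succ_iff.1 (Finset.mem_range.1 hi)
    have hpow : MvPolynomial.pderiv j ((p : MvPolynomial (Fin n) ℤ) ^ (k - i)) = 0 := by
      rw [MvPolynomial.pderiv_pow, Derivation.map_natCast, mul_zero]
    rw [MvPolynomial.pderiv_mul, hpow, zero_mul, zero_add]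
    conv_lhs => rw [← Nat.sub_add_cancel hik, pow_add]
    exact mul_dvd_mul_left _ (pow_dvd_pderiv_aeval p n i (g i) j)
  · intro h
    rw [F.as_sum]
    refine Finset.sum_induction _ (· ∈ Rset p n k) (fun _ _ => add_mem_Rset)
      (zero_mem_Rset p n k) fun m _ => monomial_mem_Rset hp m _ fun j => ?_
    rcases Nat.eq_zero_or_pos (m j) with h0 | hpos
    · simp [h0]
    -- `coeff m F * m j` is the coefficient of `∂F/∂X_j` at `m - single j 1`
    have hC : MvPolynomial.C ((p : ℤ) ^ k) ∣ MvPolynomial.pderiv j F := by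
      simpa using h j
    have hc := (MvPolynomial.C_dvd_iff_dvd_coeff _ _).1 hC (m - Finsupp.single j 1)
    have hm : m - Finsupp.single j 1 + Finsupp.single j 1 = m :=
      tsub_add_cancel_of_le (Finsupp.single_le_iff.2 hpos)
    rw [MvPolynomial.coeff_pderiv, hm] at hc
    have hmj := DFunLike.congr_fun hm j
    simp only [Finsupp.add_apply, Finsupp.single_eq_same] at hmj
    rw [← hmj]
    exact_mod_cast hc

theorem stmt5 (p : ℕ) (hp : p.Prime) (n : ℕ) (hn : 1 ≤ n) (k l : ℕ)
    (F : MvPolynomial (Fin n) ℤ) (hF : F ∈ Rset p n k) :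
    (p : MvPolynomial (Fin n) ℤ) ^ l * F ∈ Rset p n (k + l) ∧
      F ^ p ^ l ∈ Rset p n (k + l) := by
  rw [mem_Rset_iff hp] at hF
  rw [mem_Rset_iff hp, mem_Rset_iff hp]
  refine ⟨fun j => ?_, fun j => ?_⟩
  · have hpow : MvPolynomial.pderiv j ((p : MvPolynomial (Fin n) ℤ) ^ l) = 0 := by
      rw [MvPolynomial.pderiv_pow, Derivation.map_natCast, mul_zero]
    rw [MvPolynomial.pderiv_mul, hpow, zero_mul, zero_add, add_comm, pow_add]
    exact mul_dvd_mul_left _ (hF j)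
  · rw [MvPolynomial.pderiv_pow, add_comm, pow_add]
    push_cast
    exact mul_dvd_mul (dvd_mul_right _ _) (hF j)
end

section
/- Let k, ℓ ≥ 0 and let F ∈ R_k. Then for any ψ_1,…,ψ_n ∈ R_ℓ the composite polynomial F(ψ_1,…,ψ_n) lies in R_{k+ℓ}. -/
/-!
Write `φ_i` for the substitution `X_j ↦ X_j^{p^i}`, so that
`R_{k+1} = φ_{k+1}(ℤ[X]) + p·R_k` (`mem_Rset_succ`). From this recursion, `R_k` is a decreasing
sequence of subrings (`RSubring`, `Rset_succ_subset`) with `p·R_k ⊆ R_{k+1}`.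

The key point is that `F ∈ R_k` implies `F^p ∈ R_{k+1}` (`pow_p_mem_Rset`). If `F = a + p·r` with
`a = φ_k(g)` and `r ∈ R_{k-1}`, then `F ≡ a` modulo `p` in the ring `R_{k-1}`, hence
`F^p ≡ a^p` modulo `p²R_{k-1} ⊆ R_{k+1}`; and `g^p = φ_1(g) + p·h` gives
`a^p = φ_{k+1}(g) + p·φ_k(h) ∈ R_{k+1}`.

Consequently `ψ_j^{p^i} ∈ R_{l+i}`, so each summand `p^{k-i}·g_i(ψ_1^{p^i}, …, ψ_n^{p^i})` of
`F(ψ)` lies in `p^{k-i}·R_{l+i} ⊆ R_{k+l}`.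
-/

open scoped Classical

open MvPolynomial

theorem mem_Rset_zero (p n : ℕ) (F : MvPolynomial (Fin n) ℤ) : F ∈ Rset p n 0 :=
  ⟨fun _ => F, by simp⟩

theorem mem_Rset_succ {p n k : ℕ} {F : MvPolynomial (Fin n) ℤ} :
    F ∈ Rset p n (k + 1) ↔
      ∃ g, ∃ r ∈ Rset p n k, F = expand (p ^ (k + 1)) g + (p : MvPolynomial (Fin n) ℤ) * r := by
  -- Both directions split off the summand `i = k + 1` and pull one factor `p` out of the others.
  have key : ∀ g : ℕ → MvPolynomial (Fin n) ℤ,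
      ∑ i ∈ Finset.range (k + 1 + 1), (p : MvPolynomial (Fin n) ℤ) ^ (k + 1 - i) *
          aeval (fun j => X j ^ p ^ i) (g i) =
        expand (p ^ (k + 1)) (g (k + 1)) + (p : MvPolynomial (Fin n) ℤ) *
          ∑ i ∈ Finset.range (k + 1), (p : MvPolynomial (Fin n) ℤ) ^ (k - i) *
            aeval (fun j => X j ^ p ^ i) (g i) := by
    intro g
    rw [Finset.sum_range_succ, add_comm, Nat.sub_self, pow_zero, one_mul, Finset.mul_sum]
    congr 1
    refine Finset.sum_congr rfl fun i hi => ?_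
    have hi' : k + 1 - i = k - i + 1 := by
      have := Finset.mem_range.1 hi
      omega
    rw [hi', pow_succ]
    ring
  constructor
  · rintro ⟨g, rfl⟩
    exact ⟨g (k + 1), _, ⟨g, rfl⟩, key g⟩
  · rintro ⟨g, r, ⟨g', rfl⟩, rfl⟩
    refine ⟨fun i => if i = k + 1 then g else g' i, ?_⟩
    rw [key]
    simp only [if_true]
    congr 2
    refine Finset.sum_congr rfl fun i hi => ?_
    rw [if_neg (Finset.mem_range.1 hi).ne]

theorem expand_mem_Rset (p n k : ℕ) (g : MvPolynomial (Fin n) ℤ) :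
    expand (p ^ k) g ∈ Rset p n k := by
  have zero_mem : ∀ k, (0 : MvPolynomial (Fin n) ℤ) ∈ Rset p n k := fun k => ⟨0, by simp⟩
  cases k with
  | zero => exact mem_Rset_zero p n _
  | succ k => exact mem_Rset_succ.2 ⟨g, 0, zero_mem k, by simp⟩

theorem expand_succ_mem_Rset (p n k : ℕ) (g : MvPolynomial (Fin n) ℤ) :
    expand (p ^ (k + 1)) g ∈ Rset p n k := by
  rw [pow_succ, expand_mul]
  exact expand_mem_Rset p n k _

theorem exists_subring_eq_Rset (p n k : ℕ) :
    ∃ S : Subring (MvPolynomial (Fin n) ℤ), (S : Set _) = Rset p n k := by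
  induction k with
  | zero => exact ⟨⊤, by ext F; simp [mem_Rset_zero]⟩
  | succ k ih =>
    obtain ⟨S, hS⟩ := ih
    have hmem : ∀ F, F ∈ Rset p n k ↔ F ∈ S := fun F => by rw [← hS]; rfl
    have hexp : ∀ g, expand (p ^ (k + 1)) g ∈ S := fun g =>
      (hmem _).1 (expand_succ_mem_Rset p n k g)
    have hp : (p : MvPolynomial (Fin n) ℤ) ∈ S := natCast_mem S p
    refine ⟨{ carrier := Rset p n (k + 1), zero_mem' := ?_, one_mem' := ?_, add_mem' := ?_,
              mul_mem' := ?_, neg_mem' := ?_ }, rfl⟩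
    · intro a b ha hb
      simp only [mem_Rset_succ, hmem] at ha hb ⊢
      obtain ⟨g, r, hr, rfl⟩ := ha
      obtain ⟨g', r', hr', rfl⟩ := hb
      exact ⟨g * g', expand (p ^ (k + 1)) g * r' + r * expand (p ^ (k + 1)) g' + p * (r * r'),
        S.add_mem (S.add_mem (S.mul_mem (hexp g) hr') (S.mul_mem hr (hexp g')))
          (S.mul_mem hp (S.mul_mem hr hr')), by rw [map_mul]; ring⟩
    · simpa using expand_mem_Rset p n (k + 1) 1
    · intro a b ha hb
      simp only [mem_Rset_succ, hmem] at ha hb ⊢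
      obtain ⟨g, r, hr, rfl⟩ := ha
      obtain ⟨g', r', hr', rfl⟩ := hb
      exact ⟨g + g', r + r', S.add_mem hr hr', by rw [map_add]; ring⟩
    · simpa using expand_mem_Rset p n (k + 1) 0
    · intro a ha
      simp only [mem_Rset_succ, hmem] at ha ⊢
      obtain ⟨g, r, hr, rfl⟩ := ha
      exact ⟨-g, -r, S.neg_mem hr, by rw [map_neg]; ring⟩

/-- `R_k` as a bundled subring of `ℤ[X₁,…,Xₙ]`. -/
noncomputable def RSubring (p n k : ℕ) : Subring (MvPolynomial (Fin n) ℤ) :=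
  (exists_subring_eq_Rset p n k).choose.copy (Rset p n k)
    (exists_subring_eq_Rset p n k).choose_spec.symm

theorem mem_RSubring {p n k : ℕ} {F : MvPolynomial (Fin n) ℤ} :
    F ∈ RSubring p n k ↔ F ∈ Rset p n k := Iff.rfl

theorem p_mul_mem_Rset {p n k : ℕ} {F : MvPolynomial (Fin n) ℤ} (hF : F ∈ Rset p n k) :
    (p : MvPolynomial (Fin n) ℤ) * F ∈ Rset p n (k + 1) :=
  mem_Rset_succ.2 ⟨0, F, hF, by simp⟩

theorem p_pow_mul_mem_Rset {p n k : ℕ} {F : MvPolynomial (Fin n) ℤ} (hF : F ∈ Rset p n k)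
    (m : ℕ) : (p : MvPolynomial (Fin n) ℤ) ^ m * F ∈ Rset p n (k + m) := by
  induction m with
  | zero => simpa using hF
  | succ m ih =>
    rw [pow_succ', mul_assoc]
    exact p_mul_mem_Rset ih

theorem Rset_succ_subset (p n k : ℕ) : Rset p n (k + 1) ⊆ Rset p n k := by
  intro F hF
  obtain ⟨g, r, hr, rfl⟩ := mem_Rset_succ.1 hF
  exact (RSubring p n k).add_mem (expand_succ_mem_Rset p n k g)
    ((RSubring p n k).mul_mem (natCast_mem _ p) hr)

/-- Frobenius modulo `p`: `g(X)^p ≡ g(X^p)`. -/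
theorem exists_pow_eq_expand_add {p : ℕ} (hp : p.Prime) {n : ℕ} (g : MvPolynomial (Fin n) ℤ) :
    ∃ h, g ^ p = expand p g + (p : MvPolynomial (Fin n) ℤ) * h := by
  haveI := Fact.mk hp
  have hdvd : C (p : ℤ) ∣ g ^ p - expand p g := by
    rw [C_dvd_iff_zmod, map_sub, map_pow, map_expand, expand_zmod, sub_self]
  obtain ⟨h, hh⟩ := hdvd
  refine ⟨h, ?_⟩
  rw [← sub_eq_iff_eq_add', hh]
  simp

theorem expand_pow_p_mem_Rset {p : ℕ} (hp : p.Prime) {n : ℕ} (k : ℕ)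
    (g : MvPolynomial (Fin n) ℤ) : expand (p ^ k) g ^ p ∈ Rset p n (k + 1) := by
  obtain ⟨h, hh⟩ := exists_pow_eq_expand_add hp g
  refine mem_Rset_succ.2 ⟨g, expand (p ^ k) h, expand_mem_Rset p n k h, ?_⟩
  rw [← map_pow, hh, map_add, map_mul, map_natCast, pow_succ, expand_mul]

theorem pow_p_mem_Rset {p : ℕ} (hp : p.Prime) {n k : ℕ} {F : MvPolynomial (Fin n) ℤ}
    (hF : F ∈ Rset p n k) : F ^ p ∈ Rset p n (k + 1) := by
  cases k with
  | zero => simpa using expand_pow_p_mem_Rset hp 0 F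
  | succ k =>
    obtain ⟨g, r, hr, hFr⟩ := mem_Rset_succ.1 hF
    -- `F` and `φ_{k+1}(g)` are regarded as elements of the ring `R_k`, so that the quotient `s`
    -- of the difference of their `p`-th powers by `p²` is again in `R_k`.
    let a : RSubring p n k := ⟨F, Rset_succ_subset p n k hF⟩
    let b : RSubring p n k := ⟨expand (p ^ (k + 1)) g, expand_succ_mem_Rset p n k g⟩
    have hab : (p : RSubring p n k) ∣ a - b :=
      ⟨⟨r, hr⟩, Subtype.ext (by simp [a, b, hFr])⟩
    obtain ⟨s, hs⟩ := dvd_sub_pow_of_dvd_sub hab 1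
    have hs' : F ^ p = expand (p ^ (k + 1)) g ^ p + (p : MvPolynomial (Fin n) ℤ) ^ 2 * s := by
      have := congrArg Subtype.val hs
      rw [← sub_eq_iff_eq_add']
      simpa [a, b] using this
    rw [hs']
    exact (RSubring p n (k + 1 + 1)).add_mem (expand_pow_p_mem_Rset hp (k + 1) g)
      (p_pow_mul_mem_Rset s.2 2)

theorem pow_p_pow_mem_Rset {p : ℕ} (hp : p.Prime) {n k : ℕ} {F : MvPolynomial (Fin n) ℤ}
    (hF : F ∈ Rset p n k) (i : ℕ) : F ^ p ^ i ∈ Rset p n (k + i) := by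
  induction i with
  | zero => simpa using hF
  | succ i ih =>
    rw [pow_succ, pow_mul]
    exact pow_p_mem_Rset hp ih

theorem aeval_mem_subring {n : ℕ} (S : Subring (MvPolynomial (Fin n) ℤ))
    {f : Fin n → MvPolynomial (Fin n) ℤ} (hf : ∀ j, f j ∈ S) (g : MvPolynomial (Fin n) ℤ) :
    aeval f g ∈ S := by
  induction g using MvPolynomial.induction_on with
  | C a => simp
  | add g h hg hh => rw [map_add]; exact S.add_mem hg hh
  | mul_X g j hg => rw [map_mul, aeval_X]; exact S.mul_mem hg (hf j)

theorem stmt6 (p : ℕ) (hp : p.Prime) (n : ℕ) (hn : 1 ≤ n) (k l : ℕ)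
    (F : MvPolynomial (Fin n) ℤ) (hF : F ∈ Rset p n k)
    (ψ : Fin n → MvPolynomial (Fin n) ℤ) (hψ : ∀ j, ψ j ∈ Rset p n l) :
    MvPolynomial.aeval ψ F ∈ Rset p n (k + l) := by
  obtain ⟨g, rfl⟩ := hF
  rw [map_sum]
  refine (RSubring p n (k + l)).sum_mem fun i hi => ?_
  have hcomp : aeval ψ (aeval (fun j => X j ^ p ^ i : Fin n → MvPolynomial (Fin n) ℤ) (g i)) =
      aeval (fun j => ψ j ^ p ^ i) (g i) := by
    rw [← AlgHom.comp_apply, comp_aeval]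
    simp
  have hidx : k + l = l + i + (k - i) := by
    have := Finset.mem_range.1 hi
    omega
  rw [map_mul, map_pow, map_natCast, hcomp, mem_RSubring, hidx]
  exact p_pow_mul_mem_Rset
    (aeval_mem_subring (RSubring p n (l + i)) (fun j => pow_p_pow_mem_Rset hp (hψ j) i) (g i)) _
end

section
/- Let t ≥ j ≥ 0, let w' ≥ 1, and set w = w'·p^t. Let λ' be a partition of w' and set λ = p^t·λ'. Let μ be a partition of w such that there does not exist a partition μ' with μ = p^{j+1}*μ' (i.e., μ is not the multiset sum of p^{j+1} copies of some partition). Then for every n ≥ w, p^{t−j} divides the coefficient d_{λμ}. In particular this holds if p^{j+1} does not divide the number of parts of μ. -/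
/-!
The matrix `d` is symmetric: the product `∏_{i,j} (1 + x_i y_j)` equals `∑_μ m_μ(x) e_μ(y)`,
hence `∑_{λ,μ} d_{λμ} e_λ(x) e_μ(y)`, and it is unchanged when `x` and `y` are exchanged, so the
algebraic independence of the `e_k` gives `d_{λμ} = d_{μλ}` (`coeff_symm`). It therefore suffices
to study the coefficient of `e_μ` in `m_λ`, where `λ = p^t·λ'`.

Now `m_λ(x) = m_{λ'}(x^{p^t})` (`msymmM_map_mul`). Let `φ` be the endomorphism of `ℤ[e_1,…,e_n]`
induced by `x_i ↦ x_i^p`. Modulo `p` it is the Frobenius map, so `φ(e_k) = e_k^p + p h_k`, and all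
partial derivatives of `φ(e_k)` with respect to the `e_i` are divisible by `p`. By the chain rule
those of `φ^t(f)` are divisible by `p^t` for every `f` (`pderiv_dvd_of_expand`), in particular
those of `m_λ`. Thus `p^t` divides `d_{μλ}` times the multiplicity in `μ` of any part. As `μ` is not
`p^{j+1} * μ'`, some multiplicity is not divisible by `p^{j+1}`, and `p^{t-j}` divides `d_{μλ}`.
-/


open scoped Classical

/-- The exponent vector of the monomial `X_{λ₁}⋯X_{λₖ}` associated to a partition
`lam = {λ₁,…,λₖ}` with parts ≤ n; the variable `X_m` corresponds to the index `m - 1`. -/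
noncomputable def expOf (n : ℕ) (lam : Multiset ℕ) : Fin n →₀ ℕ :=
  Finsupp.equivFunOnFinite.symm fun i : Fin n => lam.count ((i : ℕ) + 1)

open MvPolynomial

/-! ### Elementary symmetric polynomials as coordinates -/

/-- The substitution `X_k ↦ e_k`, where the variable with index `i : Fin n` stands for
`e_{i+1}`. -/
noncomputable def eHom (n : ℕ) (R : Type) [CommRing R] :
    MvPolynomial (Fin n) R →ₐ[R] MvPolynomial (Fin n) R :=
  aeval (fun i : Fin n => esymm (Fin n) R ((i : ℕ) + 1))

lemma eHom_X (n : ℕ) (R : Type) [CommRing R] (i : Fin n) :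
    eHom n R (X i) = esymm (Fin n) R ((i : ℕ) + 1) := by
  simp [eHom]

lemma eHom_injective (n : ℕ) (R : Type) [CommRing R] : Function.Injective (eHom n R) := by
  intro f g h
  apply esymmAlgHom_fin_injective R (le_refl n)
  apply Subtype.ext
  rw [esymmAlgHom_apply, esymmAlgHom_apply]
  exact h

lemma exists_eHom_eq (n : ℕ) (R : Type) [CommRing R] {f : MvPolynomial (Fin n) R}
    (hf : f.IsSymmetric) : ∃ g, eHom n R g = f := by
  obtain ⟨g, hg⟩ := esymmAlgHom_fin_surjective R (le_refl n) ⟨f, hf⟩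
  refine ⟨g, ?_⟩
  have := congrArg Subtype.val hg
  rwa [esymmAlgHom_apply] at this

/-! ### The Frobenius lift in the coordinates `e_k` -/

/-- The chain rule. -/
lemma pderiv_aeval_eq_sum (n : ℕ) (g : Fin n → MvPolynomial (Fin n) ℤ) (k : Fin n)
    (f : MvPolynomial (Fin n) ℤ) :
    pderiv k (aeval g f) = ∑ i, aeval g (pderiv i f) * pderiv k (g i) := by
  induction f using MvPolynomial.induction_on with
  | C a => simp
  | add p q hp hq => simp only [map_add, hp, hq, add_mul, Finset.sum_add_distrib]
  | mul_X p i hp =>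
    simp only [map_mul, aeval_X, pderiv_mul, hp, map_add, add_mul, Finset.sum_add_distrib,
      pderiv_X, Finset.sum_mul]
    congr 1
    · exact Finset.sum_congr rfl fun x _ => by ring
    · rw [Finset.sum_eq_single i]
      · simp
      · intro b _ hb
        rw [Pi.single_eq_of_ne hb.symm]
        simp
      · simp

/-- There is an endomorphism which corresponds to `x_i ↦ x_i ^ p` in the coordinates `e_k`, and
whose Jacobian matrix vanishes modulo `p`, because `X_k ↦ X_k ^ p` modulo `p`. -/
lemma exists_frobenius_lift (n p : ℕ) (hp : p.Prime) :
    ∃ g : Fin n → MvPolynomial (Fin n) ℤ,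
      (∀ f, eHom n ℤ (aeval g f) = expand p (eHom n ℤ f)) ∧
      ∀ i k, C (p : ℤ) ∣ pderiv k (g i) := by
  have := Fact.mk hp
  have key : ∀ i : Fin n, ∃ h : MvPolynomial (Fin n) ℤ,
      eHom n ℤ (X i ^ p + C (p : ℤ) * h) = expand p (esymm (Fin n) ℤ ((i : ℕ) + 1)) := by
    intro i
    set e := esymm (Fin n) ℤ ((i : ℕ) + 1) with he
    have hes : e.IsSymmetric := esymm_isSymmetric (Fin n) ℤ _
    have hd : C (p : ℤ) ∣ expand p e - e ^ p := by
      rw [C_dvd_iff_zmod, map_sub, map_expand, map_pow, expand_zmod, sub_self]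
    obtain ⟨h, hh⟩ := hd
    have hp0 : (C (p : ℤ) : MvPolynomial (Fin n) ℤ) ≠ 0 := by
      rw [Ne, C_eq_zero]
      exact_mod_cast hp.ne_zero
    have hsymm : h.IsSymmetric := by
      intro σ
      apply mul_left_cancel₀ hp0
      rw [← hh]
      conv_lhs => rw [← rename_C σ, ← map_mul, ← hh, map_sub, rename_expand, map_pow, hes σ]
    obtain ⟨h', rfl⟩ := exists_eHom_eq n ℤ hsymm
    refine ⟨h', ?_⟩
    have hC : eHom n ℤ (C (p : ℤ)) = C (p : ℤ) := by simp [eHom]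
    rw [map_add, map_mul, map_pow, eHom_X, hC, ← hh]
    ring
  choose h hh using key
  refine ⟨fun i => X i ^ p + C (p : ℤ) * h i, ?_, ?_⟩
  · intro f
    have : (eHom n ℤ).comp (aeval fun i => X i ^ p + C (p : ℤ) * h i) =
        (expand p).comp (eHom n ℤ) := by
      apply MvPolynomial.algHom_ext
      intro i
      simp only [AlgHom.comp_apply, aeval_X, eHom_X]
      exact hh i
    exact DFunLike.congr_fun this f
  · intro i k
    rw [map_add, pderiv_C_mul, pderiv_pow]
    refine dvd_add ?_ (dvd_mul_right _ _)
    have : ((p : ℕ) : MvPolynomial (Fin n) ℤ) = C (p : ℤ) := by simp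
    rw [this, mul_assoc]
    exact dvd_mul_right _ _

/-- If a polynomial in the `e_k` becomes a symmetric polynomial in the `x_i ^ (p ^ t)`, then its
gradient with respect to the `e_k` vanishes modulo `p ^ t`. -/
lemma pderiv_dvd_of_expand (n p : ℕ) (hp : p.Prime) (t : ℕ) (ψ f : MvPolynomial (Fin n) ℤ)
    (h : eHom n ℤ ψ = expand (p ^ t) (eHom n ℤ f)) (k : Fin n) :
    C ((p : ℤ) ^ t) ∣ pderiv k ψ := by
  obtain ⟨g, hg, hgd⟩ := exists_frobenius_lift n p hp
  induction t generalizing ψ k with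
  | zero => simp
  | succ t ih =>
    have hsymm : (expand (p ^ t) (eHom n ℤ f)).IsSymmetric := by
      intro σ
      rw [rename_expand]
      congr 1
      have := (esymmAlgHom (Fin n) ℤ n f).2 σ
      rwa [esymmAlgHom_apply] at this
    obtain ⟨θ, hθ⟩ := exists_eHom_eq n ℤ hsymm
    have hψ : ψ = aeval g θ := by
      apply eHom_injective
      rw [h, hg, hθ, ← expand_mul, pow_succ']
    rw [hψ, pderiv_aeval_eq_sum]
    refine Finset.dvd_sum fun i _ => ?_
    rw [pow_succ, C_mul]
    refine mul_dvd_mul ?_ (hgd i k)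
    have := map_dvd (aeval g : MvPolynomial (Fin n) ℤ →ₐ[ℤ] _) (ih θ hθ i)
    rwa [show (aeval g : MvPolynomial (Fin n) ℤ →ₐ[ℤ] _) (C ((p : ℤ) ^ t)) = C ((p : ℤ) ^ t) by
      simp] at this

/-! ### The Cauchy kernel -/

/-- The product `∏_i (1 + ∑_k x_i ^ k Y_k)`, as a polynomial in the `Y_k` over `ℤ[x]`. Its
coefficients are the monomial symmetric polynomials in `x`, and the substitution `Y_k ↦ e_k(y)`
turns it into `∏_{i, j} (1 + x_i y_j)`. The exponent vector `expOf n {o}` gives `Y_o`, and gives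
`1` for `o = 0`. -/
noncomputable def kernelF (n : ℕ) : MvPolynomial (Fin n) (MvPolynomial (Fin n) ℤ) :=
  ∏ i : Fin n, ∑ o : Fin (n + 1), monomial (expOf n {(o : ℕ)}) (X i ^ (o : ℕ))

lemma expOf_apply (n : ℕ) (s : Multiset ℕ) (i : Fin n) :
    expOf n s i = s.count ((i : ℕ) + 1) := rfl

lemma expOf_zero_singleton (n : ℕ) : expOf n {0} = 0 := by
  ext i
  simp [expOf_apply]

lemma expOf_succ_singleton (n : ℕ) (k : Fin n) :
    expOf n {(k : ℕ) + 1} = Finsupp.single k 1 := by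
  ext i
  simp [expOf_apply, Multiset.count_singleton, Finsupp.single_apply, Fin.ext_iff, eq_comm]

lemma eHom_kernelF (n : ℕ) :
    eHom n _ (kernelF n) = ∏ i : Fin n, ∏ j : Fin n, (1 + C (X i) * X j) := by
  rw [kernelF, map_prod]
  refine Finset.prod_congr rfl fun i _ => ?_
  rw [Finset.prod_one_add, Finset.sum_powerset, map_sum, Finset.card_univ, Fintype.card_fin,
    Finset.sum_range]
  refine Finset.sum_congr rfl fun o _ => ?_
  have h1 : eHom n (MvPolynomial (Fin n) ℤ) (monomial (expOf n {(o : ℕ)}) (X i ^ (o : ℕ))) =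
      C (X i ^ (o : ℕ)) * esymm (Fin n) _ (o : ℕ) := by
    induction o using Fin.cases with
    | zero =>
      rw [Fin.val_zero, expOf_zero_singleton]
      simp [eHom]
    | succ k =>
      rw [Fin.val_succ, expOf_succ_singleton]
      rw [eHom, aeval_monomial, Finsupp.prod_single_index (by simp), pow_one]
      rfl
  rw [h1, esymm, Finset.mul_sum]
  refine Finset.sum_congr rfl fun s hs => ?_
  rw [Finset.prod_mul_distrib, Finset.prod_const, (Finset.mem_powersetCard.mp hs).2, C_pow]

lemma coeff_kernelF_isSymmetric (n : ℕ) (α : Fin n →₀ ℕ) :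
    (coeff α (kernelF n)).IsSymmetric := by
  intro σ
  have h : map (rename σ : MvPolynomial (Fin n) ℤ →ₐ[ℤ] _).toRingHom (kernelF n) = kernelF n := by
    rw [kernelF, map_prod]
    refine Fintype.prod_equiv σ _ _ fun i => ?_
    rw [map_sum]
    refine Finset.sum_congr rfl fun o _ => ?_
    rw [map_monomial]
    simp
  conv_rhs => rw [← h, coeff_map]
  rfl

lemma coeff_coeff_commAlgEquiv (n : ℕ) (G : MvPolynomial (Fin n) (MvPolynomial (Fin n) ℤ))
    (α β : Fin n →₀ ℕ) :
    coeff β (coeff α (commAlgEquiv ℤ (Fin n) (Fin n) G)) = coeff α (coeff β G) := by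
  induction G using MvPolynomial.induction_on' with
  | add p q hp hq => simp [hp, hq]
  | monomial u a =>
    induction a using MvPolynomial.induction_on' with
    | add p q hp hq => simp [hp, hq]
    | monomial v c =>
      have : commAlgEquiv ℤ (Fin n) (Fin n) (monomial u (monomial v c)) =
          monomial v (monomial u c) := AddMonoidAlgebra.commAlgEquiv_single_single ..
      rw [this]
      simp only [coeff_monomial]
      split_ifs <;> simp_all [coeff_monomial]

/-- Substituting `X_k ↦ e_k` in both sets of variables. -/
noncomputable def eHom₂ (n : ℕ) : MvPolynomial (Fin n) (MvPolynomial (Fin n) ℤ) →+*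
    MvPolynomial (Fin n) (MvPolynomial (Fin n) ℤ) :=
  (eHom n (MvPolynomial (Fin n) ℤ)).toRingHom.comp (map (eHom n ℤ).toRingHom)

lemma eHom₂_apply (n : ℕ) (G : MvPolynomial (Fin n) (MvPolynomial (Fin n) ℤ)) :
    eHom₂ n G = eHom n _ (map (eHom n ℤ).toRingHom G) := rfl

lemma eHom₂_injective (n : ℕ) : Function.Injective (eHom₂ n) :=
  (eHom_injective n _).comp (map_injective _ (eHom_injective n ℤ))

lemma commAlgEquiv_commAlgEquiv (n : ℕ) (G : MvPolynomial (Fin n) (MvPolynomial (Fin n) ℤ)) :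
    commAlgEquiv ℤ (Fin n) (Fin n) (commAlgEquiv ℤ (Fin n) (Fin n) G) = G := by
  ext α β
  rw [coeff_coeff_commAlgEquiv, coeff_coeff_commAlgEquiv]

lemma commAlgEquiv_eHom₂ (n : ℕ) (G : MvPolynomial (Fin n) (MvPolynomial (Fin n) ℤ)) :
    commAlgEquiv ℤ (Fin n) (Fin n) (eHom₂ n G) =
      eHom₂ n (commAlgEquiv ℤ (Fin n) (Fin n) G) := by
  have hX : ∀ i : Fin n, eHom₂ n (X i) = esymm (Fin n) _ ((i : ℕ) + 1) := by
    intro i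
    rw [eHom₂_apply, map_X, eHom_X]
  have hC : ∀ i : Fin n, eHom₂ n (C (X i)) = C (esymm (Fin n) ℤ ((i : ℕ) + 1)) := by
    intro i
    rw [eHom₂_apply, map_C, ← eHom_X]
    exact (eHom n (MvPolynomial (Fin n) ℤ)).commutes _
  have hsw : ∀ i : Fin n, commAlgEquiv ℤ (Fin n) (Fin n)
      (C (esymm (Fin n) ℤ ((i : ℕ) + 1))) = esymm (Fin n) _ ((i : ℕ) + 1) := by
    intro i
    rw [commAlgEquiv_C, map_esymm]
  have : (commAlgEquiv ℤ (Fin n) (Fin n)).toRingEquiv.toRingHom.comp (eHom₂ n) =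
      (eHom₂ n).comp (commAlgEquiv ℤ (Fin n) (Fin n)).toRingEquiv.toRingHom := by
    apply MvPolynomial.ringHom_ext'
    · apply MvPolynomial.ringHom_ext'
      · exact RingHom.ext_int _ _
      · intro i
        change commAlgEquiv ℤ (Fin n) (Fin n) (eHom₂ n (C (X i))) =
          eHom₂ n (commAlgEquiv ℤ (Fin n) (Fin n) (C (X i)))
        rw [hC, hsw, commAlgEquiv_C_X, hX]
    · intro i
      change commAlgEquiv ℤ (Fin n) (Fin n) (eHom₂ n (X i)) =
        eHom₂ n (commAlgEquiv ℤ (Fin n) (Fin n) (X i))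
      rw [hX, commAlgEquiv_X, hC, ← hsw, commAlgEquiv_commAlgEquiv]
  exact DFunLike.congr_fun this G

/-- The symmetry `d_{λμ} = d_{μλ}`: the expansion of `∏ (1 + x_i y_j)` in the
`e_λ(x) e_μ(y)` is unique, and the product does not change when `x` and `y` are exchanged. -/
lemma coeff_symm (n : ℕ) (α β : Fin n →₀ ℕ) (f g : MvPolynomial (Fin n) ℤ)
    (hf : eHom n ℤ f = coeff α (kernelF n)) (hg : eHom n ℤ g = coeff β (kernelF n)) :
    coeff β f = coeff α g := by
  obtain ⟨G, hG⟩ : ∃ G, map (eHom n ℤ).toRingHom G = kernelF n := by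
    have : kernelF n ∈ Set.range (map (σ := Fin n) (eHom n ℤ).toRingHom) := by
      rw [mem_range_map_iff_coeffs_subset]
      intro c hc
      obtain ⟨γ, _, rfl⟩ := mem_coeffs_iff.mp hc
      exact exists_eHom_eq n ℤ (coeff_kernelF_isSymmetric n γ)
    exact this
  have hcoeff : ∀ γ, eHom n ℤ (coeff γ G) = coeff γ (kernelF n) := by
    intro γ
    rw [← hG, coeff_map]
    rfl
  have hf' : f = coeff α G := eHom_injective n ℤ (by rw [hf, hcoeff])
  have hg' : g = coeff β G := eHom_injective n ℤ (by rw [hg, hcoeff])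
  have hsw : commAlgEquiv ℤ (Fin n) (Fin n) G = G := by
    apply eHom₂_injective
    rw [← commAlgEquiv_eHom₂, eHom₂_apply, hG, eHom_kernelF]
    simp only [map_prod, map_add, map_mul, map_one, commAlgEquiv_C_X, commAlgEquiv_X]
    rw [Finset.prod_comm]
    simp only [mul_comm]
  rw [hf', hg', ← coeff_coeff_commAlgEquiv, hsw]

/-! ### Monomial symmetric polynomials -/

lemma coeff_sum_monomial (n N : ℕ) (P : (Fin n → ℕ) → Prop) [DecidablePred P] (b : Fin n →₀ ℕ)
    (hP : P b → ∀ i, b i ≤ N) :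
    coeff b (∑ d : Fin n → Fin (N + 1), if P (fun i => (d i : ℕ)) then
      monomial (Finsupp.equivFunOnFinite.symm fun i => (d i : ℕ)) (1 : ℤ) else 0) =
      if P b then 1 else 0 := by
  rw [coeff_sum]
  split_ifs with h
  · rw [Finset.sum_eq_single fun i => ⟨b i, Nat.lt_succ_of_le (hP h i)⟩]
    · have hb : (Finsupp.equivFunOnFinite.symm fun i => b i) = b := by ext; rfl
      simp only [h, if_true, hb, coeff_monomial]
    · intro d _ hd
      split_ifs
      · rw [coeff_monomial, if_neg]
        rintro rfl
        exact hd (by ext; rfl)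
      · simp
    · simp
  · refine Finset.sum_eq_zero fun d _ => ?_
    split_ifs with hd
    · rw [coeff_monomial, if_neg]
      rintro rfl
      exact h hd
    · simp

/-- The multiset of nonzero values of an exponent vector. -/
def partsOf (n : ℕ) (b : Fin n → ℕ) : Multiset ℕ :=
  (Multiset.map b Finset.univ.val).filter (· ≠ 0)

lemma mem_partsOf {n : ℕ} {b : Fin n → ℕ} {i : Fin n} (h : b i ≠ 0) : b i ∈ partsOf n b := by
  simp only [partsOf, Multiset.mem_filter, Multiset.mem_map]
  exact ⟨⟨i, by simp, rfl⟩, h⟩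

lemma coeff_msymmM (n : ℕ) (μ : Multiset ℕ) (b : Fin n →₀ ℕ) :
    coeff b (msymmM n ℤ μ) = if partsOf n b = μ then 1 else 0 := by
  rw [← coeff_sum_monomial n μ.sum (fun b => partsOf n b = μ) b]
  · unfold msymmM partsOf
    congr!
  · intro h i
    by_cases hi : b i = 0
    · simp [hi]
    · exact Multiset.le_sum_of_mem (h ▸ mem_partsOf hi)

lemma expOf_add (n : ℕ) (s u : Multiset ℕ) : expOf n (s + u) = expOf n s + expOf n u := by
  ext i
  simp [expOf_apply]

lemma sum_expOf_singleton (n : ℕ) (b : Fin n → ℕ) :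
    ∑ i, expOf n {b i} = expOf n (partsOf n b) := by
  have h1 : ∀ s : Finset (Fin n), ∑ i ∈ s, expOf n {b i} = expOf n (s.val.map b) := by
    intro s
    induction s using Finset.induction_on with
    | empty => ext i; simp [expOf_apply]
    | insert a s ha ih =>
      rw [Finset.sum_insert ha, ih, Finset.insert_val_of_notMem ha, Multiset.map_cons,
        ← Multiset.singleton_add, expOf_add]
  rw [h1]
  ext i
  rw [expOf_apply, expOf_apply, partsOf, Multiset.count_filter_of_pos (by simp)]

lemma expOf_inj (n : ℕ) (s u : Multiset ℕ) (hs : ∀ i ∈ s, 0 < i ∧ i ≤ n)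
    (hu : ∀ i ∈ u, 0 < i ∧ i ≤ n) (h : expOf n s = expOf n u) : s = u := by
  ext a
  by_cases ha : 0 < a ∧ a ≤ n
  · have := DFunLike.congr_fun h ⟨a - 1, by omega⟩
    rw [expOf_apply, expOf_apply] at this
    rwa [show a - 1 + 1 = a by omega] at this
  · rw [Multiset.count_eq_zero_of_notMem fun h => ha (hs a h),
      Multiset.count_eq_zero_of_notMem fun h => ha (hu a h)]

lemma coeff_kernelF (n : ℕ) (μ : Multiset ℕ) (hμ : ∀ i ∈ μ, 0 < i ∧ i ≤ n) :
    coeff (expOf n μ) (kernelF n) = msymmM n ℤ μ := by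
  have hexp : kernelF n = ∑ d : Fin n → Fin (n + 1),
      monomial (∑ i, expOf n {(d i : ℕ)})
        (monomial (Finsupp.equivFunOnFinite.symm fun i => (d i : ℕ)) (1 : ℤ)) := by
    rw [kernelF, Finset.prod_univ_sum, Fintype.piFinset_univ]
    refine Finset.sum_congr rfl fun d _ => ?_
    rw [← monomial_sum_prod]
    congr 1
    rw [monomial_eq, C_1, one_mul, Finsupp.prod_fintype _ _ (by simp)]
    rfl
  ext b
  rw [hexp, coeff_sum, coeff_msymmM]
  have hbound : ∀ b : Fin n → ℕ, partsOf n b = μ → ∀ i, b i ≤ n := by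
    intro b h i
    by_cases hi : b i = 0
    · simp [hi]
    · exact (hμ _ (h ▸ mem_partsOf hi)).2
  rw [← coeff_sum_monomial n n (fun b => partsOf n b = μ) b (hbound b)]
  congr 1
  refine Finset.sum_congr rfl fun d _ => ?_
  rw [coeff_monomial, sum_expOf_singleton]
  have hiff : expOf n (partsOf n fun i => (d i : ℕ)) = expOf n μ ↔
      partsOf n (fun i => (d i : ℕ)) = μ := by
    refine ⟨fun h => expOf_inj n _ _ ?_ hμ h, fun h => by rw [h]⟩
    intro a ha
    simp only [partsOf, Multiset.mem_filter, Multiset.mem_map] at ha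
    obtain ⟨⟨i, _, rfl⟩, h0⟩ := ha
    exact ⟨Nat.pos_of_ne_zero h0, Nat.le_of_lt_succ (d i).2⟩
  simp only [hiff]

/-- `m_{q·λ}(x) = m_λ(x ^ q)`. -/
lemma msymmM_map_mul (n q : ℕ) (hq : q ≠ 0) (s : Multiset ℕ) :
    msymmM n ℤ (s.map fun i => q * i) = expand q (msymmM n ℤ s) := by
  ext b
  rw [coeff_msymmM]
  by_cases hb : ∀ i, q ∣ b i
  · obtain ⟨c, rfl⟩ : ∃ c : Fin n →₀ ℕ, b = q • c := by
      refine ⟨Finsupp.equivFunOnFinite.symm fun i => b i / q, ?_⟩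
      ext i
      exact (Nat.mul_div_cancel' (hb i)).symm
    rw [coeff_expand_smul _ hq, coeff_msymmM]
    have hparts : partsOf n (q • c : Fin n →₀ ℕ) = (partsOf n c).map fun i => q * i := by
      simp only [partsOf, Multiset.filter_map, Multiset.map_map]
      congr 1
      refine Multiset.filter_congr fun i _ => ?_
      simp [hq]
    have hinj : Function.Injective fun i : ℕ => q * i := fun a b h => by simpa [hq] using h
    rw [hparts]
    simp only [(Multiset.map_injective hinj).eq_iff]
  · push Not at hb
    obtain ⟨i, hi⟩ := hb
    rw [coeff_expand_of_not_dvd _ hi, if_neg]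
    intro h
    have hm : b i ∈ s.map fun i => q * i :=
      h ▸ mem_partsOf (b := b) (fun h0 => hi (h0 ▸ dvd_zero q))
    obtain ⟨a, _, ha⟩ := Multiset.mem_map.mp hm
    exact hi ⟨a, ha.symm⟩

/-- If the `p`-adic valuation of `a` is at most `j`, then a multiple `a c` of `p ^ t` forces
`p ^ (t - j)` to divide `c`. -/
lemma pow_dvd_of_pow_dvd_mul (p : ℕ) (hp : p.Prime) (t j a : ℕ) (hjt : j ≤ t) (c : ℤ)
    (ha : ¬ p ^ (j + 1) ∣ a) (h : (p : ℤ) ^ t ∣ c * a) : (p : ℤ) ^ (t - j) ∣ c := by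
  have hpi : Prime (p : ℤ) := Nat.prime_iff_prime_int.mp hp
  have ha0 : a ≠ 0 := by
    rintro rfl
    exact ha (dvd_zero _)
  obtain ⟨i, m, hm, rfl⟩ := Nat.exists_eq_pow_mul_and_not_dvd ha0 p hp.ne_one
  have hij : i ≤ j := by
    by_contra hlt
    exact ha ((pow_dvd_pow p (by omega)).mul_right m)
  rw [Nat.cast_mul, ← mul_assoc] at h
  have h1 := hpi.pow_dvd_of_dvd_mul_right t (by exact_mod_cast hm) h
  rw [show t = t - i + i by omega, pow_add, Nat.cast_pow] at h1
  have h2 := Int.dvd_of_mul_dvd_mul_right (pow_ne_zero i hpi.ne_zero) h1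
  exact (pow_dvd_pow _ (by omega)).trans h2

theorem stmt8 (p : ℕ) (hp : p.Prime) (t j : ℕ) (hjt : j ≤ t)
    (w' : ℕ) (hw' : 1 ≤ w')
    -- `λ'` is a partition of `w'` and `λ = p^t·λ'`
    (lam' : Multiset ℕ) (hpos : ∀ i ∈ lam', 0 < i) (hsum : lam'.sum = w')
    -- `μ` is a partition of `w = w'·p^t` which is not of the form `p^(j+1) * μ'`
    (μ : Multiset ℕ) (hμpos : ∀ i ∈ μ, 0 < i) (hμsum : μ.sum = w' * p ^ t)
    (hμ : ¬ ∃ μ' : Multiset ℕ, μ = p ^ (j + 1) • μ')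
    (n : ℕ) (hn : w' * p ^ t ≤ n) (hμcard : Multiset.card μ ≤ n)
    (hlamle : ∀ i ∈ lam', p ^ t * i ≤ n)
    -- `ψ` is the unique polynomial with `m_μ = ψ(e_1,…,e_n)`
    (ψ : MvPolynomial (Fin n) ℤ)
    (hψ : MvPolynomial.aeval (fun i : Fin n => MvPolynomial.esymm (Fin n) ℤ ((i : ℕ) + 1)) ψ =
      msymmM n ℤ μ) :
    -- `p^(t-j)` divides `d_{λμ}`, the coefficient of `X_{λ₁}⋯X_{λₖ}` in `ψ`
    (p : ℤ) ^ (t - j) ∣ ψ.coeff (expOf n (lam'.map fun i => p ^ t * i)) := by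
  set q := p ^ t with hq
  have hq0 : q ≠ 0 := pow_ne_zero _ hp.ne_zero
  have hlam'n : ∀ i ∈ lam', 0 < i ∧ i ≤ n := fun i hi =>
    ⟨hpos i hi, (Nat.le_mul_of_pos_left i (Nat.pos_of_ne_zero hq0)).trans (hlamle i hi)⟩
  have hlamn : ∀ i ∈ lam'.map (fun i => q * i), 0 < i ∧ i ≤ n := by
    intro a ha
    obtain ⟨i, hi, rfl⟩ := Multiset.mem_map.mp ha
    exact ⟨Nat.mul_pos (Nat.pos_of_ne_zero hq0) (hpos i hi), hlamle i hi⟩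
  have hμn : ∀ i ∈ μ, 0 < i ∧ i ≤ n := fun i hi =>
    ⟨hμpos i hi, (Multiset.le_sum_of_mem hi).trans (hμsum.le.trans hn)⟩
  obtain ⟨f, hf⟩ := exists_eHom_eq n ℤ (coeff_kernelF_isSymmetric n (expOf n lam'))
  obtain ⟨g, hg⟩ := exists_eHom_eq n ℤ
    (coeff_kernelF_isSymmetric n (expOf n (lam'.map fun i => q * i)))
  have hψ' : eHom n ℤ ψ = coeff (expOf n μ) (kernelF n) := by
    rw [coeff_kernelF n μ hμn]
    exact hψ
  rw [coeff_symm n _ _ ψ g hψ' hg]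
  have hexp : eHom n ℤ g = expand (p ^ t) (eHom n ℤ f) := by
    rw [hg, hf, coeff_kernelF n _ hlamn, coeff_kernelF n _ hlam'n, msymmM_map_mul n q hq0]
  -- Some part of `μ` has a multiplicity which is not divisible by `p ^ (j + 1)`.
  obtain ⟨a, ha⟩ : ∃ a, ¬ p ^ (j + 1) ∣ μ.count a := by
    by_contra! hall
    exact hμ (Multiset.exists_smul_of_dvd_count μ fun a _ => hall a)
  have haμ : a ∈ μ := by
    by_contra h
    rw [Multiset.count_eq_zero_of_notMem h] at ha
    exact ha (dvd_zero _)
  obtain ⟨ha0, han⟩ := hμn a haμ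
  let k : Fin n := ⟨a - 1, by omega⟩
  have hk : expOf n μ k = μ.count a := by
    rw [expOf_apply]
    congr 1
    exact Nat.sub_add_cancel ha0
  have hd := (C_dvd_iff_dvd_coeff _ _).mp (pderiv_dvd_of_expand n p hp t g f hexp k)
    (expOf n μ - Finsupp.single k 1)
  have hpos' : 1 ≤ expOf n μ k := by
    rw [hk]
    exact Multiset.one_le_count_iff_mem.mpr haμ
  have hle : Finsupp.single k 1 ≤ expOf n μ := by
    rwa [Finsupp.single_le_iff]
  rw [coeff_pderiv, tsub_add_cancel_of_le hle] at hd
  apply pow_dvd_of_pow_dvd_mul p hp t j (μ.count a) hjt _ ha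
  have hc : (((expOf n μ - Finsupp.single k 1 : Fin n →₀ ℕ) k : ℕ) : ℤ) + 1 = μ.count a := by
    rw [← hk, Finsupp.tsub_apply, Finsupp.single_eq_same]
    omega
  rwa [hc] at hd
end

section
/- Let 1 ≤ h ≤ n and set j = v̄_p(h). Then v_L(c_h) ≥ i_j^{π_L} + h, with equality if and only if either i_j^{π_L} = ∞ (so that both sides are ∞), or i_j^{π_L} < ∞ and h = b_j. -/
/-!
Since `v_L = n v_K` on `K`, the number `v_L(c_h) - h` is one of the terms of the minimum defining
`i_j` for `j = v̄_p(h)`, which gives the inequality. If `i_j = ∞`, then that term is infinite, so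
`c_h = 0` and both sides are infinite. If `i_j` is finite, it is attained at some index `k`
with `1 ≤ k ≤ n` (`exists_of_iPi_eq_coe`) and hence `i_j ≡ -k` modulo `n`. So `h = b_j` forces
`k = h`, that is, equality at `h`; conversely, equality at `h` exhibits `i_j = v_K(c_h) n - h`.
-/

open scoped Classical

/-- `cCoef K L πL n h` is `c_h`, where the minimal polynomial of the uniformizer `πL` is
`X^n - c₁X^{n-1} + ⋯ + (-1)^{n-1}c_{n-1}X + (-1)^n c_n`. -/
noncomputable def cCoef (K L : Type) [Field K] [Field L] [Algebra K L]
    (πL : L) (n h : ℕ) : K :=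
  (-1) ^ h * (minpoly K πL).coeff (n - h)

/-- The valuation of `x`, with value `⊤` at `x = 0`. -/
noncomputable def vext (L : Type) [Field L] (vL : L → ℤ) (x : L) : WithTop ℤ :=
  if x = 0 then ⊤ else (vL x : WithTop ℤ)

/-- `iPi p ν n K vK c j` is `i_j^{π_L} = min{ n·v_K(c_h) - h : 1 ≤ h ≤ n, v̄_p(h) ≤ j }`,
an element of `ℤ_{≥0} ∪ {∞}`. -/
noncomputable def iPi (p ν n : ℕ) (K : Type) [Field K] (vK : K → ℤ) (c : ℕ → K)
    (j : ℕ) : WithTop ℤ :=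
  ((Finset.Icc 1 n).filter fun h => min (padicValNat p h) ν ≤ j).inf fun h =>
    if c h = 0 then ⊤ else (((n : ℤ) * vK (c h) - (h : ℤ) : ℤ) : WithTop ℤ)

/-- A finite value of `iPi` is attained by one of the terms of the minimum. -/
theorem exists_of_iPi_eq_coe {p ν n : ℕ} {K : Type} [Field K] {vK : K → ℤ} {c : ℕ → K}
    {j : ℕ} {m : ℤ} (hm : iPi p ν n K vK c j = (m : WithTop ℤ)) :
    ∃ k, 1 ≤ k ∧ k ≤ n ∧ c k ≠ 0 ∧ (n : ℤ) * vK (c k) - (k : ℤ) = m := by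
  unfold iPi at hm
  rcases Finset.eq_empty_or_nonempty
    ((Finset.Icc 1 n).filter fun h => min (padicValNat p h) ν ≤ j) with he | hne
  · rw [he, Finset.inf_empty] at hm
    exact absurd hm.symm (WithTop.coe_ne_top)
  · obtain ⟨k, hk, hk'⟩ := Finset.exists_mem_eq_inf _ hne fun h =>
      if c h = 0 then (⊤ : WithTop ℤ) else (((n : ℤ) * vK (c h) - (h : ℤ) : ℤ) : WithTop ℤ)
    rw [hk'] at hm
    obtain ⟨hk1, hk2⟩ := Finset.mem_Icc.1 (Finset.mem_filter.1 hk).1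
    by_cases hc : c k = 0
    · simp [hc] at hm
    · rw [if_neg hc] at hm
      exact ⟨k, hk1, hk2, hc, WithTop.coe_injective hm⟩

theorem iPi_le {p ν n : ℕ} {K : Type} [Field K] {vK : K → ℤ} {c : ℕ → K}
    {h : ℕ} (h1 : 1 ≤ h) (h2 : h ≤ n) :
    iPi p ν n K vK c (min (padicValNat p h) ν) ≤
      if c h = 0 then ⊤ else (((n : ℤ) * vK (c h) - (h : ℤ) : ℤ) : WithTop ℤ) :=
  Finset.inf_le (f := fun h =>
      if c h = 0 then (⊤ : WithTop ℤ) else (((n : ℤ) * vK (c h) - (h : ℤ) : ℤ) : WithTop ℤ))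
    (Finset.mem_filter.2 ⟨Finset.mem_Icc.2 ⟨h1, h2⟩, le_rfl⟩)

theorem stmt10
    (p : ℕ) (hp : p.Prime)
    (K L : Type) [Field K] [Field L] [Algebra K L] [FiniteDimensional K L]
    [Algebra.IsSeparable K L]
    (n : ℕ) (hn : 0 < n) (hrank : Module.finrank K L = n)
    (vK : K → ℤ) (vL : L → ℤ)
    (hvKmul : ∀ x y : K, x ≠ 0 → y ≠ 0 → vK (x * y) = vK x + vK y)
    (hvKadd : ∀ x y : K, x ≠ 0 → y ≠ 0 → x + y ≠ 0 → min (vK x) (vK y) ≤ vK (x + y))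
    (hvKsurj : ∀ m : ℤ, ∃ x : K, x ≠ 0 ∧ vK x = m)
    (hvLmul : ∀ x y : L, x ≠ 0 → y ≠ 0 → vL (x * y) = vL x + vL y)
    (hvLadd : ∀ x y : L, x ≠ 0 → y ≠ 0 → x + y ≠ 0 → min (vL x) (vL y) ≤ vL (x + y))
    (hvLsurj : ∀ m : ℤ, ∃ x : L, x ≠ 0 ∧ vL x = m)
    (hext : ∀ x : K, x ≠ 0 → vL (algebraMap K L x) = (n : ℤ) * vK x)
    (hcomplete : ∀ s : ℕ → K,
      (∀ m : ℤ, ∃ N : ℕ, ∀ i, N ≤ i → ∀ j, N ≤ j → s i - s j = 0 ∨ m ≤ vK (s i - s j)) →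
      ∃ x : K, ∀ m : ℤ, ∃ N : ℕ, ∀ i, N ≤ i → s i - x = 0 ∨ m ≤ vK (s i - x))
    (hreschar : (p : K) = 0 ∨ 1 ≤ vK (p : K))
    (hresperf : ∀ x : K, (x = 0 ∨ 0 ≤ vK x) →
      ∃ y : K, (y = 0 ∨ 0 ≤ vK y) ∧ (x - y ^ p = 0 ∨ 1 ≤ vK (x - y ^ p)))
    (u ν : ℕ) (hu : ¬ p ∣ u) (hnu : n = u * p ^ ν)
    (πL : L) (hπ : vL πL = 1)
    (h : ℕ) (h1 : 1 ≤ h) (h2 : h ≤ n) :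
    iPi p ν n K vK (cCoef K L πL n) (min (padicValNat p h) ν) + ((h : ℤ) : WithTop ℤ) ≤
        vext L vL (algebraMap K L (cCoef K L πL n h)) ∧
      (iPi p ν n K vK (cCoef K L πL n) (min (padicValNat p h) ν) + ((h : ℤ) : WithTop ℤ) =
          vext L vL (algebraMap K L (cCoef K L πL n h)) ↔
        (iPi p ν n K vK (cCoef K L πL n) (min (padicValNat p h) ν) = ⊤ ∨
          ∃ a b : ℤ, 1 ≤ b ∧ b ≤ (n : ℤ) ∧
            iPi p ν n K vK (cCoef K L πL n) (min (padicValNat p h) ν) =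
              ((a * (n : ℤ) - b : ℤ) : WithTop ℤ) ∧
            (h : ℤ) = b)) := by
  have hle := iPi_le (p := p) (ν := ν) (vK := vK) (c := cCoef K L πL n) h1 h2
  have hatt := fun m => exists_of_iPi_eq_coe (p := p) (ν := ν) (n := n) (vK := vK)
    (c := cCoef K L πL n) (j := min (padicValNat p h) ν) (m := m)
  generalize cCoef K L πL n = c at hle hatt ⊢
  generalize iPi p ν n K vK c (min (padicValNat p h) ν) = i at hle hatt ⊢
  by_cases hc : c h = 0
  · have hv : vext L vL (algebraMap K L (c h)) = ⊤ := by simp [vext, hc]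
    rw [hv]
    refine ⟨le_top, fun e => Or.inl ?_, ?_⟩
    · simpa using e
    · rintro (e | ⟨a, b, -, -, e, rfl⟩)
      · simp [e]
      · -- The index attaining the minimum is `h` itself, contradicting `c h = 0`.
        obtain ⟨k, hk1, hk2, hck, hk⟩ := hatt _ e
        have hkh : k = h := by
          have hd : (n : ℤ) ∣ (k : ℤ) - h := ⟨vK (c k) - a, by linarith⟩
          have := Int.eq_zero_of_abs_lt_dvd hd (by rw [abs_lt]; constructor <;> omega)
          omega
        exact absurd (hkh ▸ hc) hck
  · have hv : vext L vL (algebraMap K L (c h)) = (((n : ℤ) * vK (c h) : ℤ) : WithTop ℤ) := by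
      simp [vext, hc, hext]
    rw [hv]
    rw [if_neg hc] at hle
    induction i using WithTop.recTopCoe with
    | top => exact absurd (top_le_iff.1 hle) WithTop.coe_ne_top
    | coe m =>
      have hle' : m ≤ (n : ℤ) * vK (c h) - h := WithTop.coe_le_coe.1 hle
      rw [← WithTop.coe_add, WithTop.coe_le_coe, WithTop.coe_inj]
      refine ⟨by linarith, fun e => Or.inr ⟨vK (c h), h, by omega, by omega, ?_, rfl⟩, ?_⟩
      · rw [WithTop.coe_inj]
        linarith
      · rintro (e | ⟨a, b, -, -, e, rfl⟩)
        · exact absurd e WithTop.coe_ne_top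
        · obtain ⟨k, hk1, hk2, hck, hk⟩ := hatt _ rfl
          rw [WithTop.coe_inj] at e
          -- Both `k` and `h` lie in `[1, n]` and are congruent to `-m` modulo `n`.
          have hkh : k = h := by
            have hd : (n : ℤ) ∣ (k : ℤ) - h := ⟨vK (c k) - a, by linarith⟩
            have := Int.eq_zero_of_abs_lt_dvd hd (by rw [abs_lt]; constructor <;> omega)
            omega
          subst hkh
          linarith
end
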